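/- arXiv:1306.0767 — 8 statements merged into one kernel-verified Lean document; each statement's English description precedes it below -/
import Mathlib

section
/- Define f(k) := (1 − 2k/((9/4)k² − 2k + 1))^{2k} for real k. Then f is increasing on the interval k ≥ 2; that is, f(k) ≤ f(k') whenever 2 ≤ k ≤ k'. -/
/-!
Put `t = k / (3k/2 - 1)²`. Since `(9/4)k² - 2k + 1 = (3k/2 - 1)² + k`, the base of the power is
`(1 - t) / (1 + t)`, so that `f k = exp (-4 k artanh t)` for `t < 1`. Now
`k t = (k / (3k/2 - 1))²` decreases in `k`, and so does `t`, while
`artanh t / t = 1 + t²/3 + t⁴/5 + ⋯` increases in `t`. Hence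
`k artanh t = (k t) (artanh t / t)` decreases in `k`. The argument needs `t ≤ 1`, which beyond the
pole `k = 2/3` means that `k` is at least the larger root `(8 + 2√7) / 9` of `9k² - 16k + 4`.
-/

open Set

section Artanh

variable {c t : ℝ}

lemma hasSum_artanh (ht : |t| < 1) :
    HasSum (fun n : ℕ => t ^ (2 * n + 1) / (2 * n + 1)) (Real.artanh t) := by
  obtain ⟨h_neg, h_one⟩ := abs_lt.mp ht
  rw [Real.artanh_eq_half_log ⟨h_neg.le, h_one.le⟩,
    Real.log_div (by linarith) (by linarith)]
  refine ((Real.hasSum_log_sub_log_of_abs_lt_one ht).mul_left (1 / 2)).congr_fun fun n => ?_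
  ring

lemma artanh_mul_le (hc₀ : 0 ≤ c) (hc₁ : c ≤ 1) (ht₀ : 0 ≤ t) (ht₁ : t < 1) :
    Real.artanh (c * t) ≤ c * Real.artanh t := by
  have h_abs : |t| < 1 := by rwa [abs_of_nonneg ht₀]
  have h_abs_mul : |c * t| < 1 := by
    rw [abs_of_nonneg (mul_nonneg hc₀ ht₀)]
    exact (mul_le_of_le_one_left ht₀ hc₁).trans_lt ht₁
  refine hasSum_le (fun n => ?_) (hasSum_artanh h_abs_mul) ((hasSum_artanh h_abs).mul_left c)
  rw [mul_pow, mul_div_assoc]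
  gcongr
  exact pow_le_of_le_one hc₀ hc₁ (by simp)

lemma one_sub_div_one_add_rpow_eq_exp (x : ℝ) (ht : t ∈ Ioo (-1) 1) :
    ((1 - t) / (1 + t)) ^ x = Real.exp (-2 * (x * Real.artanh t)) := by
  have h_sub : 0 < 1 - t := by linarith [ht.2]
  have h_add : 0 < 1 + t := by linarith [ht.1]
  rw [Real.rpow_def_of_pos (div_pos h_sub h_add), Real.artanh_eq_half_log (Ioo_subset_Icc_self ht),
    Real.log_div h_sub.ne' h_add.ne', Real.log_div h_add.ne' h_sub.ne']
  ring_nf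

end Artanh

section Monotonicity

variable {x y s t : ℝ}

lemma mul_artanh_le_mul_artanh (hx : 0 < x) (hxy : x ≤ y) (hs : s < 1) (ht : 0 ≤ t)
    (hts : y * t ≤ x * s) : y * Real.artanh t ≤ x * Real.artanh s := by
  have hy : 0 < y := hx.trans_le hxy
  have hs₀ : 0 ≤ s := nonneg_of_mul_nonneg_right ((mul_nonneg hy.le ht).trans hts) hx
  have h_ratio : x / y ≤ 1 := div_le_one_of_le₀ hxy hy.le
  have h_le : t ≤ x / y * s := by
    rwa [div_mul_eq_mul_div, le_div_iff₀' hy]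
  have h_lt : x / y * s < 1 := (mul_le_of_le_one_left hs₀ h_ratio).trans_lt hs
  calc
    y * Real.artanh t ≤ y * Real.artanh (x / y * s) := by
      gcongr
      exact Real.artanh_le_artanh (by linarith) h_lt h_le
    _ ≤ y * (x / y * Real.artanh s) := by
      gcongr
      exact artanh_mul_le (by positivity) h_ratio hs₀ hs
    _ = x * Real.artanh s := by field_simp

lemma one_sub_div_one_add_rpow_le (hx : 0 < x) (hxy : x ≤ y) (hs : s ≤ 1) (ht : 0 ≤ t)
    (hts : y * t ≤ x * s) :
    ((1 - s) / (1 + s)) ^ x ≤ ((1 - t) / (1 + t)) ^ y := by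
  have h_le : t ≤ s :=
    le_of_mul_le_mul_left ((mul_le_mul_of_nonneg_right hxy ht).trans hts) hx
  rcases hs.eq_or_lt with rfl | hs
  · rw [sub_self, zero_div, Real.zero_rpow hx.ne']
    exact Real.rpow_nonneg (div_nonneg (by linarith) (by linarith)) y
  · rw [one_sub_div_one_add_rpow_eq_exp x ⟨by linarith, hs⟩,
      one_sub_div_one_add_rpow_eq_exp y ⟨by linarith, by linarith⟩, Real.exp_le_exp]
    linarith [mul_artanh_le_mul_artanh hx hxy hs ht hts]

end Monotonicity

lemma antitoneOn_div_mul_sub (a : ℝ) {b : ℝ} (hb : 0 ≤ b) :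
    AntitoneOn (fun k => k / (a * k - b)) {k | b < a * k} := by
  intro k (hk : b < a * k) k' (hk' : b < a * k') hkk'
  rw [div_le_div_iff₀ (by linarith) (by linarith)]
  linarith [mul_le_mul_of_nonneg_right hkk' hb]

lemma antitoneOn_mul_div_mul_sub_sq {a b : ℝ} (ha : 0 ≤ a) (hb : 0 ≤ b) :
    AntitoneOn (fun k => k * (k / (a * k - b) ^ 2)) {k | b < a * k} := by
  intro k hk k' (hk' : b < a * k') hkk'
  have hk'_pos : 0 < k' := pos_of_mul_pos_right (hb.trans_lt hk') ha
  have h_sq (k : ℝ) : k * (k / (a * k - b) ^ 2) = (k / (a * k - b)) ^ 2 := by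
    rw [div_pow, ← mul_div_assoc, sq k]
  simp only [h_sq]
  exact pow_le_pow_left₀ (div_nonneg hk'_pos.le (sub_pos.mpr hk').le)
    (antitoneOn_div_mul_sub a hb hk hk' hkk') 2

lemma one_sub_two_mul_div_add {k q : ℝ} (hq : q ≠ 0) (hqk : q + k ≠ 0) :
    1 - 2 * k / (q + k) = (1 - k / q) / (1 + k / q) := by
  rw [one_sub_div hq, one_add_div hq, div_div_div_cancel_right₀ hq, one_sub_div hqk]
  ring

lemma le_three_halves_mul_sub_one_sq {k : ℝ} (hk : (8 + 2 * √7) / 9 ≤ k) :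
    k ≤ (3 / 2 * k - 1) ^ 2 := by
  have h_factor : (3 / 2 * k - 1) ^ 2 - k =
      9 / 4 * ((k - (8 + 2 * √7) / 9) * (k - (8 - 2 * √7) / 9)) := by
    linear_combination (1 / 9) * Real.sq_sqrt (show (0 : ℝ) ≤ 7 by norm_num)
  have h_other : 0 ≤ k - (8 - 2 * √7) / 9 := by linarith [Real.sqrt_nonneg 7]
  have h_prod := mul_nonneg (sub_nonneg.mpr hk) h_other
  linarith

theorem f_increasing_general (f : ℝ → ℝ)
    (hf : ∀ k : ℝ, f k = (1 - 2 * k / ((9 / 4) * k ^ 2 - 2 * k + 1)) ^ (2 * k)) :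
    MonotoneOn f (Ici ((8 + 2 * √7) / 9)) := by
  have h_pole {k : ℝ} (hk : (8 + 2 * √7) / 9 ≤ k) : 1 < 3 / 2 * k := by
    linarith [Real.sqrt_nonneg 7]
  have h_base {k : ℝ} (hk : (8 + 2 * √7) / 9 ≤ k) : f k =
      ((1 - k / (3 / 2 * k - 1) ^ 2) / (1 + k / (3 / 2 * k - 1) ^ 2)) ^ (2 * k) := by
    have h_sq : 0 < (3 / 2 * k - 1) ^ 2 := pow_pos (sub_pos.mpr (h_pole hk)) 2
    rw [hf, ← one_sub_two_mul_div_add h_sq.ne' (by linarith [h_pole hk])]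
    ring_nf
  intro k hk k' hk' hkk'
  rw [mem_Ici] at hk hk'
  have hk_pos : 0 < k := by linarith [h_pole hk]
  have h_mul : k' * (k' / (3 / 2 * k' - 1) ^ 2) ≤ k * (k / (3 / 2 * k - 1) ^ 2) :=
    antitoneOn_mul_div_mul_sub_sq (by norm_num) zero_le_one (h_pole hk) (h_pole hk') hkk'
  rw [h_base hk, h_base hk']
  exact one_sub_div_one_add_rpow_le (by linarith) (by linarith)
    (div_le_one_of_le₀ (le_three_halves_mul_sub_one_sq hk) (sq_nonneg _))
    (div_nonneg (hk_pos.le.trans hkk') (sq_nonneg _)) (by linarith)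

/-- The function `f(k) = (1 − 2k/((9/4)k² − 2k + 1))^{2k}` is increasing
on `k ≥ 2`. -/
theorem f_increasing (f : ℝ → ℝ)
    (hf : ∀ k : ℝ, f k = (1 - 2 * k / ((9 / 4) * k ^ 2 - 2 * k + 1)) ^ (2 * k)) :
    ∀ k k' : ℝ, 2 ≤ k → k ≤ k' → f k ≤ f k' := by
  have h_root : (8 + 2 * √7) / 9 ≤ 2 := by
    linarith [(Real.sqrt_le_left (by norm_num)).mpr (show (7 : ℝ) ≤ 3 ^ 2 by norm_num)]
  exact fun k k' hk hkk' =>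
    f_increasing_general f hf (h_root.trans hk) (h_root.trans (hk.trans hkk')) hkk'
end

section
/- Let n ≥ 9 be a natural number and let k be an integer with 1 ≤ k ≤ 2√n/3. Fix a k-involution s ∈ Sym_n and let trip(n,k) denote the proportion, among all k-involutions in Sym_n, of those k-involutions r with |supp r ∩ supp s| = 1. Then trip(n,k) ≥ min{ trip(n,1), trip(n, ⌊2√n/3⌋) }. -/
open scoped Classical

/-- `trip n k s` is the proportion, among all `k`-involutions of `Sym_n` (elements of order
two moving exactly `2k` points), of those `r` whose support meets the support of `s` in
exactly one point. -/
noncomputable def trip (n k : ℕ) (s : Equiv.Perm (Fin n)) : ℝ :=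
  ((Finset.univ.filter (fun r : Equiv.Perm (Fin n) =>
      orderOf r = 2 ∧ r.support.card = 2 * k ∧ (r.support ∩ s.support).card = 1)).card : ℝ) /
    ((Finset.univ.filter (fun r : Equiv.Perm (Fin n) =>
      orderOf r = 2 ∧ r.support.card = 2 * k)).card : ℝ)

/-!
Put `m = 2k`. All `m`-subsets of `{1, …, n}` support equally many involutions, so `trip(n, k)` is
the probability `p m` that a random `m`-subset meets a fixed `m`-subset in exactly one point,
`p m = m (n - m choose m - 1) / (n choose m)`. The ratio
`p (m + 1) / p m = (1 + 1 / m)² (1 - (m - 1) / (n - m)) (1 - m / (n - m))`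
is a product of nonnegative decreasing functions of `m`, so once `p` stops increasing it never
increases again; on an interval such a sequence attains its minimum at an endpoint.
-/

open Finset

lemma min_le_of_descent_persists {β : Type*} [LinearOrder β] {f : ℕ → β} {a b c : ℕ}
    (hf : ∀ m ≥ a, f (m + 1) ≤ f m → f (m + 2) ≤ f (m + 1)) (hac : a ≤ c) (hcb : c ≤ b) :
    min (f a) (f b) ≤ f c := by
  by_cases hasc : ∀ m, a ≤ m → m < c → f m ≤ f (m + 1)
  · refine min_le_of_left_le ?_
    induction c, hac using Nat.le_induction with
    | base => rfl
    | succ c hac ih =>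
      exact (ih (by omega) fun m ham hmc ↦ hasc m ham (by omega)).trans
        (hasc c hac (Nat.lt_succ_self c))
  · push Not at hasc
    obtain ⟨j, haj, hjc, hj⟩ := hasc
    have hdesc : ∀ m ≥ j, f (m + 1) ≤ f m :=
      Nat.le_induction hj.le fun m hjm ↦ hf m (haj.trans hjm)
    exact min_le_of_right_le
      (antitoneOn_nat_Ici_of_succ_le hdesc hjc.le (hjc.le.trans hcb) hcb)

section Combinatorics

variable {α : Type*} [DecidableEq α]

lemma card_filter_powersetCard_card_inter_eq (U S : Finset α) (i j : ℕ) :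
    #{A ∈ powersetCard (i + j) U | #(A ∩ S) = i} = (#(U ∩ S)).choose i * (#(U \ S)).choose j := by
  rw [← card_powersetCard, ← card_powersetCard, ← card_product]
  refine card_nbij' (fun A ↦ (A ∩ S, A \ S)) (fun P ↦ P.1 ∪ P.2) ?_ ?_ ?_ ?_
  · intro A hA
    simp only [coe_filter, mem_powersetCard, Set.mem_ofPred_eq] at hA
    obtain ⟨⟨hAU, hA⟩, hAS⟩ := hA
    have hsplit := card_inter_add_card_sdiff A S
    simp only [mem_coe, mem_product, mem_powersetCard]
    exact ⟨⟨inter_subset_inter_right hAU, hAS⟩, sdiff_subset_sdiff hAU subset_rfl, by omega⟩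
  · rintro ⟨B, C⟩ hBC
    simp only [mem_coe, mem_product, mem_powersetCard, subset_inter_iff, subset_sdiff] at hBC
    obtain ⟨⟨⟨hBU, hBS⟩, hB⟩, ⟨hCU, hCS⟩, hC⟩ := hBC
    have hinter : (B ∪ C) ∩ S = B := by
      rw [union_inter_distrib_right, inter_eq_left.2 hBS, disjoint_iff_inter_eq_empty.1 hCS,
        union_empty]
    simp only [coe_filter, mem_powersetCard, Set.mem_ofPred_eq]
    refine ⟨⟨union_subset hBU hCU, ?_⟩, by rw [hinter, hB]⟩
    rw [card_union_of_disjoint (hCS.symm.mono_left hBS), hB, hC]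
  · exact fun A _ ↦ sup_inf_sdiff A S
  · rintro ⟨B, C⟩ hBC
    simp only [mem_coe, mem_product, mem_powersetCard, subset_inter_iff, subset_sdiff] at hBC
    ext x <;> grind [Finset.disjoint_left]

variable [Fintype α]

lemma card_filter_orderOf_support_eq_of_card_eq (d : ℕ) {A B : Finset α} (h : #A = #B) :
    #{r : Equiv.Perm α | orderOf r = d ∧ r.support = A} =
      #{r : Equiv.Perm α | orderOf r = d ∧ r.support = B} := by
  obtain ⟨σ, rfl⟩ := Equiv.Perm.exists_map_finset_eq A B h
  refine card_equiv (MulAut.conj σ).toEquiv fun r ↦ ?_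
  have hord : orderOf (σ * r * σ⁻¹) = orderOf r := MulEquiv.orderOf_eq (MulAut.conj σ) r
  simp [hord, Equiv.Perm.support_conj]

lemma card_filter_orderOf_support_mem (d : ℕ) {𝒜 : Finset (Finset α)} {S : Finset α}
    (h : ∀ A ∈ 𝒜, #A = #S) :
    #{r : Equiv.Perm α | orderOf r = d ∧ r.support ∈ 𝒜} =
      #𝒜 * #{r : Equiv.Perm α | orderOf r = d ∧ r.support = S} := by
  have hmaps : Set.MapsTo Equiv.Perm.support
      ({r : Equiv.Perm α | orderOf r = d ∧ r.support ∈ 𝒜} : Finset (Equiv.Perm α))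
      (𝒜 : Set (Finset α)) := by
    simp +contextual [Set.MapsTo]
  rw [card_eq_sum_card_fiberwise hmaps]
  refine sum_const_nat fun A hA ↦ ?_
  rw [← card_filter_orderOf_support_eq_of_card_eq d (h A hA), filter_filter]
  congr 1
  grind

lemma pos_of_orderOf_eq_two_of_card_support_eq {s : Equiv.Perm α} {k : ℕ}
    (hs : orderOf s = 2) (hk : #s.support = 2 * k) : 0 < k := by
  have hs1 : s ≠ 1 := by
    rintro rfl
    simp at hs
  have := Equiv.Perm.two_le_card_support_of_ne_one hs1
  omega

end Combinatorics

/-- The probability that a uniformly random `m`-subset of an `n`-set meets a fixed `m`-subset in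
exactly one point. At `m = 0` the truncated `m - 1` is harmless, since the factor `m` vanishes. -/
noncomputable def meetOnceProb (n m : ℕ) : ℝ :=
  m * (n - m).choose (m - 1) / n.choose m

lemma trip_eq_meetOnceProb {n k : ℕ} {s : Equiv.Perm (Fin n)} (hs : orderOf s = 2)
    (hk : #s.support = 2 * k) : trip n k s = meetOnceProb n (2 * k) := by
  set N := #{r : Equiv.Perm (Fin n) | orderOf r = 2 ∧ r.support = s.support} with hN
  have hNpos : 0 < N := card_pos.2 ⟨s, by simp [hs]⟩
  have hsub : 1 + (2 * k - 1) = 2 * k := by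
    have := pos_of_orderOf_eq_two_of_card_support_eq hs hk
    omega
  have hall : #{r : Equiv.Perm (Fin n) | orderOf r = 2 ∧ #r.support = 2 * k} =
      n.choose (2 * k) * N := by
    simpa using card_filter_orderOf_support_mem 2 (𝒜 := powersetCard (2 * k) univ)
      (S := s.support) (by simp [hk])
  have hmeet : #{r : Equiv.Perm (Fin n) | orderOf r = 2 ∧ #r.support = 2 * k ∧
      #(r.support ∩ s.support) = 1} = 2 * k * (n - 2 * k).choose (2 * k - 1) * N := by
    have hcount := card_filter_powersetCard_card_inter_eq univ s.support 1 (2 * k - 1)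
    rw [hsub, univ_inter, ← compl_eq_univ_sdiff, card_compl, hk, Nat.choose_one_right,
      Fintype.card_fin] at hcount
    rw [← hcount, hN, ← card_filter_orderOf_support_mem 2 (by simp +contextual [hk])]
    simp
  rw [trip, meetOnceProb, hall, hmeet]
  push_cast
  exact mul_div_mul_right _ _ (by positivity)

lemma meetOnceProb_nonneg (n m : ℕ) : 0 ≤ meetOnceProb n m := by
  unfold meetOnceProb
  positivity

lemma meetOnceProb_pos {n m : ℕ} (hm : 1 ≤ m) (hmn : 2 * m ≤ n + 1) : 0 < meetOnceProb n m := by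
  have hnum : 0 < (n - m).choose (m - 1) := Nat.choose_pos (by omega)
  have hden : 0 < n.choose m := Nat.choose_pos (by omega)
  unfold meetOnceProb
  positivity

lemma meetOnceProb_eq_zero {n m : ℕ} (hmn : n - m < m - 1) : meetOnceProb n m = 0 := by
  rw [meetOnceProb, Nat.choose_eq_zero_of_lt hmn]
  simp

/-- The ratio `meetOnceProb n (x + 1) / meetOnceProb n x`, extended to real `n` and `x` and written
so that its monotonicity in `x` is visible factor by factor. -/
noncomputable def meetOnceRatio (n x : ℝ) : ℝ :=
  (1 + 1 / x) ^ 2 * ((1 - (x - 1) / (n - x)) * (1 - x / (n - x)))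

lemma meetOnceRatio_antitoneOn (n : ℝ) : AntitoneOn (meetOnceRatio n) (Set.Icc 1 (n / 2)) := by
  rintro x ⟨hx1, hx⟩ y ⟨hy1, hy⟩ hxy
  have hyn : 0 < n - y := by linarith
  have hfst : 0 ≤ 1 - (y - 1) / (n - y) := sub_nonneg.2 ((div_le_one hyn).2 (by linarith))
  have hsnd : 0 ≤ 1 - y / (n - y) := sub_nonneg.2 ((div_le_one hyn).2 (by linarith))
  have hfst' : 0 ≤ 1 - (x - 1) / (n - x) := hfst.trans (by gcongr)
  unfold meetOnceRatio
  gcongr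

lemma meetOnceProb_succ {n m : ℕ} (hm : 1 ≤ m) (hmn : 2 * m ≤ n) :
    meetOnceProb n (m + 1) = meetOnceProb n m * meetOnceRatio n m := by
  have hden : (n.choose (m + 1) : ℝ) * (m + 1) = n.choose m * (n - m) := by
    rw [← Nat.cast_sub (by omega)]
    exact_mod_cast Nat.choose_succ_right_eq n m
  have hlower : ((n - m).choose m : ℝ) * m = (n - m).choose (m - 1) * (n - m - (m - 1)) := by
    have := Nat.choose_succ_right_eq (n - m) (m - 1)
    rw [Nat.sub_add_cancel hm] at this
    rw [← Nat.cast_pred hm, ← Nat.cast_sub (by omega), ← Nat.cast_sub (by omega)]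
    exact_mod_cast this
  have hupper : ((n - (m + 1)).choose m : ℝ) * (n - m) = (n - m).choose m * (n - m - m) := by
    have := Nat.choose_mul_succ_eq (n - (m + 1)) m
    rw [show n - (m + 1) + 1 = n - m by omega] at this
    rw [← Nat.cast_sub (by omega), ← Nat.cast_sub (by omega)]
    exact_mod_cast this
  have hm0 : (m : ℝ) ≠ 0 := by positivity
  have hnm0 : (n : ℝ) - m ≠ 0 := by
    rw [← Nat.cast_sub (by omega), Nat.cast_ne_zero]
    omega
  rw [← eq_div_iff (by positivity)] at hden
  rw [← eq_div_iff hm0] at hlower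
  rw [← eq_div_iff hnm0, hlower] at hupper
  rw [meetOnceProb, meetOnceProb, meetOnceRatio, Nat.add_sub_cancel, hden, hupper]
  push_cast
  field_simp

lemma meetOnceProb_descent_persists {n m : ℕ} (hm : 1 ≤ m)
    (hdesc : meetOnceProb n (m + 1) ≤ meetOnceProb n m) :
    meetOnceProb n (m + 2) ≤ meetOnceProb n (m + 1) := by
  obtain hlt | hle := lt_or_ge n (2 * (m + 1))
  · rw [meetOnceProb_eq_zero (by omega)]
    exact meetOnceProb_nonneg n (m + 1)
  have hm' : (1 : ℝ) ≤ m := mod_cast hm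
  have hle' : 2 * ((m : ℝ) + 1) ≤ n := mod_cast hle
  have hratio : meetOnceRatio n m ≤ 1 := by
    rwa [meetOnceProb_succ hm (by omega),
      mul_le_iff_le_one_right (meetOnceProb_pos hm (by omega))] at hdesc
  have hratio_succ : meetOnceRatio n (m + 1 : ℕ) ≤ 1 := by
    refine (meetOnceRatio_antitoneOn n ⟨hm', ?_⟩ ⟨?_, ?_⟩ ?_).trans hratio <;>
      push_cast <;> linarith
  rw [meetOnceProb_succ (Nat.le_add_left 1 m) hle]
  exact mul_le_of_le_one_right (meetOnceProb_nonneg n (m + 1)) hratio_succ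

theorem trip_ge_min_general {n i j k : ℕ} (hik : i ≤ k) (hkj : k ≤ j)
    {s s₁ s₂ : Equiv.Perm (Fin n)}
    (hs : orderOf s = 2) (hssupp : #s.support = 2 * k)
    (hs₁ : orderOf s₁ = 2) (hs₁supp : #s₁.support = 2 * i)
    (hs₂ : orderOf s₂ = 2) (hs₂supp : #s₂.support = 2 * j) :
    min (trip n i s₁) (trip n j s₂) ≤ trip n k s := by
  have hi : 0 < i := pos_of_orderOf_eq_two_of_card_support_eq hs₁ hs₁supp
  rw [trip_eq_meetOnceProb hs hssupp, trip_eq_meetOnceProb hs₁ hs₁supp,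
    trip_eq_meetOnceProb hs₂ hs₂supp]
  exact min_le_of_descent_persists
    (fun m hm ↦ meetOnceProb_descent_persists (by omega)) (by omega) (by omega)

/-- For `n ≥ 9` and `1 ≤ k ≤ 2√n/3`,
`trip(n,k) ≥ min(trip(n,1), trip(n,⌊2√n/3⌋))`. -/
theorem trip_ge_min (n : ℕ) (hn : 9 ≤ n) (k : ℕ) (hk1 : 1 ≤ k)
    (hk2 : (k : ℝ) ≤ 2 * Real.sqrt n / 3)
    (s s₁ s₂ : Equiv.Perm (Fin n))
    (hs : orderOf s = 2) (hssupp : s.support.card = 2 * k)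
    (hs₁ : orderOf s₁ = 2) (hs₁supp : s₁.support.card = 2 * 1)
    (hs₂ : orderOf s₂ = 2) (hs₂supp : s₂.support.card = 2 * ⌊2 * Real.sqrt n / 3⌋₊) :
    min (trip n 1 s₁) (trip n ⌊2 * Real.sqrt n / 3⌋₊ s₂) ≤ trip n k s := by
  exact trip_ge_min_general hk1 (Nat.le_floor hk2) hs hssupp hs₁ hs₁supp hs₂ hs₂supp
end

section
/- Let n and k be natural numbers with n ≥ 4k − 1 and k ≥ 1, and let s ∈ Sym_n be a k-involution. Then the number of k-involutions r ∈ Sym_n with |supp r ∩ supp s| = 1 equals 2k·(n−2k)·inv(n−2k−1, k−1), where inv(m,j) := m!/(2^j · j! · (m−2j)!). Moreover, the total number of k-involutions in Sym_n equals inv(n,k) = n!/(2^k · k! · (n−2k)!). -/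
open scoped Classical

/-- `invCount m j = m!/(2^j · j! · (m−2j)!)`, the number of `j`-involutions in `Sym_m`
(for `m ≥ 2j` the division is exact). -/
def invCount (m j : ℕ) : ℕ :=
  m.factorial / (2 ^ j * j.factorial * (m - 2 * j).factorial)

/-!
A `k`-involution `r` whose support meets a set `S` in the single point `a` sends `a` to some
`b ∉ S`, and `swap a b * r` is then a `(k - 1)`-involution supported in the complement of `S ∪ {b}`.
Conversely, multiplying such a `(k - 1)`-involution by `swap a b` gives back `r`. Hence each of the
`#S * #Sᶜ` pairs `(a, b)` contributes as many involutions as there are `(k - 1)`-involutions of a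
set with `#Sᶜ - 1` points.
-/

section

open Equiv Equiv.Perm Finset

variable {α : Type*} [DecidableEq α]

theorem disjoint_swap_left_iff {a b : α} (hab : a ≠ b) {t : Perm α} :
    Perm.Disjoint (swap a b) t ↔ t a = a ∧ t b = b := by
  refine ⟨fun h => ⟨(h a).resolve_left ?_, (h b).resolve_left ?_⟩, fun ⟨ha, hb⟩ x => ?_⟩
  · simpa using hab.symm
  · simpa using hab
  · by_cases hx : x = a ∨ x = b
    · exact .inr (by rcases hx with rfl | rfl <;> assumption)
    · exact .inl (swap_apply_of_ne_of_ne (not_or.1 hx).1 (not_or.1 hx).2)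

theorem disjoint_swap_of_involutive_swap_mul {a b : α} (hab : a ≠ b) {t : Perm α}
    (h : Function.Involutive (swap a b * t)) (hb : (swap a b * t) a = b) :
    Perm.Disjoint (swap a b) t := by
  have ha : (swap a b * t) b = a := by simpa only [hb] using h a
  rw [mul_apply, swap_apply_eq_iff] at ha hb
  exact (disjoint_swap_left_iff hab).2 ⟨by simpa using hb, by simpa using ha⟩

variable [Fintype α] {k : ℕ}

/-- A `k`-involution: a product of `k` disjoint transpositions. It is encoded by its cycle type, so
that the `0`-involutions are exactly the identity. -/
def IsKInvolution (k : ℕ) (r : Perm α) : Prop :=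
  r.cycleType = Multiset.replicate k 2

namespace IsKInvolution

variable {r : Perm α}

theorem sq_eq_one (h : IsKInvolution k r) : r ^ 2 = 1 :=
  pow_prime_eq_one_iff.2 fun _ hc => Multiset.eq_of_mem_replicate (h ▸ hc)

theorem involutive (h : IsKInvolution k r) : Function.Involutive r := fun x => by
  rw [← mul_apply, ← sq, h.sq_eq_one, one_apply]

theorem card_support (h : IsKInvolution k r) : #r.support = 2 * k := by
  rw [← sum_cycleType, h, Multiset.sum_replicate, smul_eq_mul, mul_comm]

end IsKInvolution

theorem isKInvolution_iff_sq_eq_one {r : Perm α} :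
    IsKInvolution k r ↔ r ^ 2 = 1 ∧ #r.support = 2 * k := by
  refine ⟨fun h => ⟨h.sq_eq_one, h.card_support⟩, fun ⟨hsq, hcard⟩ => ?_⟩
  have hr : IsKInvolution (Multiset.card r.cycleType) r := cycleType_of_pow_prime_eq_one hsq
  have hk : Multiset.card r.cycleType = k :=
    Nat.eq_of_mul_eq_mul_left two_pos (hr.card_support.symm.trans hcard)
  rwa [hk] at hr

theorem isKInvolution_iff_orderOf_eq_two (hk : k ≠ 0) {r : Perm α} :
    IsKInvolution k r ↔ orderOf r = 2 ∧ #r.support = 2 * k := by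
  rw [isKInvolution_iff_sq_eq_one]
  refine and_congr_left fun hcard => ?_
  have hr : r ≠ 1 := by
    rintro rfl
    simp [hk] at hcard
  rw [orderOf_eq_prime_iff, and_iff_left hr]

theorem isKInvolution_succ_swap_mul_iff {a b : α} {t : Perm α} (hab : a ≠ b)
    (ht : Perm.Disjoint (swap a b) t) :
    IsKInvolution (k + 1) (swap a b * t) ↔ IsKInvolution k t := by
  rw [IsKInvolution, IsKInvolution, ht.cycleType_mul,
    isSwap_iff_cycleType.1 (swap_isSwap_iff.2 hab), Multiset.replicate_succ,
    Multiset.singleton_add, Multiset.cons_inj_right]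

theorem support_swap_mul_inter_eq_singleton_iff {a b : α} {S : Finset α} (ha : a ∈ S) (hb : b ∉ S)
    {t : Perm α} (ht : Perm.Disjoint (swap a b) t) :
    (swap a b * t).support ∩ S = {a} ↔ t.support ⊆ (insert b S)ᶜ := by
  have hab : a ≠ b := ne_of_mem_of_not_mem ha hb
  obtain ⟨hta, htb⟩ := (disjoint_swap_left_iff hab).1 ht
  have haS : a ∉ t.support ∩ S := fun h => notMem_support.2 hta (mem_inter.1 h).1
  rw [ht.support_mul, support_swap hab, insert_union, insert_inter_of_mem ha, singleton_union,
    insert_inter_of_notMem hb, subset_compl_iff_disjoint_right, disjoint_insert_right,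
    and_iff_right (notMem_support.2 htb), disjoint_iff_inter_eq_empty]
  exact ⟨fun h => by rw [← erase_insert haS, h, erase_singleton], fun h => by rw [h, insert_empty]⟩

theorem isKInvolution_swap_mul_and_inter_iff {a b : α} {S : Finset α} (ha : a ∈ S) (hb : b ∉ S)
    {t : Perm α} :
    (IsKInvolution (k + 1) (swap a b * t) ∧ (swap a b * t).support ∩ S = {a} ∧
        (swap a b * t) a = b) ↔
      IsKInvolution k t ∧ t.support ⊆ (insert b S)ᶜ := by
  have hab : a ≠ b := ne_of_mem_of_not_mem ha hb
  constructor
  · rintro ⟨hr, hS, hrab⟩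
    have hdisj := disjoint_swap_of_involutive_swap_mul hab hr.involutive hrab
    exact ⟨(isKInvolution_succ_swap_mul_iff hab hdisj).1 hr,
      (support_swap_mul_inter_eq_singleton_iff ha hb hdisj).1 hS⟩
  · rintro ⟨ht, hS⟩
    have hfix : ∀ x ∈ insert b S, t x = x := fun x hx =>
      notMem_support.1 fun hxt => mem_compl.1 (hS hxt) hx
    have hta : t a = a := hfix a (mem_insert_of_mem ha)
    have htb : t b = b := hfix b (mem_insert_self b S)
    have hdisj : Perm.Disjoint (swap a b) t := (disjoint_swap_left_iff hab).2 ⟨hta, htb⟩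
    exact ⟨(isKInvolution_succ_swap_mul_iff hab hdisj).2 ht,
      (support_swap_mul_inter_eq_singleton_iff ha hb hdisj).2 hS,
      by rw [mul_apply, hta, swap_apply_left]⟩

theorem card_isKInvolution (hk : 2 * k ≤ Fintype.card α) :
    #{r : Perm α | IsKInvolution k r} = invCount (Fintype.card α) k := by
  have hcycle : (Multiset.replicate k 2).sum ≤ Fintype.card α ∧
      ∀ c ∈ Multiset.replicate k 2, 2 ≤ c :=
    ⟨by simpa [mul_comm] using hk, fun c hc => (Multiset.eq_of_mem_replicate hc).ge⟩
  have hcount : ∏ c ∈ (Multiset.replicate k 2).toFinset,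
      ((Multiset.replicate k 2).count c).factorial = k.factorial := by
    rcases eq_or_ne k 0 with rfl | hk0
    · simp
    · simp [Multiset.toFinset_replicate, hk0]
  have hcard := card_of_cycleType α (Multiset.replicate k 2)
  rw [if_pos hcycle, hcount, Multiset.sum_replicate, Multiset.prod_replicate, smul_eq_mul,
    mul_comm k 2, mul_assoc, mul_comm (Nat.factorial _)] at hcard
  unfold IsKInvolution invCount
  convert hcard

theorem filter_isKInvolution_support_subset (T : Finset α) :
    ({r : Perm α | IsKInvolution k r ∧ r.support ⊆ T} : Finset (Perm α)) =
      ({t : Perm T | IsKInvolution k t} : Finset (Perm T)).map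
        ⟨ofSubtype, ofSubtype_injective⟩ := by
  ext r
  simp only [mem_filter_univ, mem_map, Function.Embedding.coeFn_mk]
  constructor
  · rintro ⟨hr, hT⟩
    obtain ⟨t, rfl⟩ := mem_range_ofSubtype_iff.2 (coe_subset.2 hT)
    exact ⟨t, cycleType_ofSubtype.symm.trans hr, rfl⟩
  · rintro ⟨t, ht, rfl⟩
    exact ⟨cycleType_ofSubtype.trans ht, fun x hx => ((mem_support_ofSubtype x t).1 hx).1⟩

theorem card_isKInvolution_support_subset {T : Finset α} (hk : 2 * k ≤ #T) :
    #{r : Perm α | IsKInvolution k r ∧ r.support ⊆ T} = invCount #T k := by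
  rw [filter_isKInvolution_support_subset, card_map,
    card_isKInvolution ((Fintype.card_coe T).symm ▸ hk), Fintype.card_coe]

theorem card_isKInvolution_support_inter_eq_singleton_apply_eq {a b : α} {S : Finset α}
    (ha : a ∈ S) (hb : b ∉ S) (hS : 2 * k + 1 ≤ #Sᶜ) :
    #{r : Perm α | IsKInvolution (k + 1) r ∧ r.support ∩ S = {a} ∧ r a = b} =
      invCount (#Sᶜ - 1) k := by
  have hcard : #(insert b S)ᶜ = #Sᶜ - 1 := by
    rw [compl_insert, card_erase_of_mem (mem_compl.2 hb)]
  rw [← hcard, ← card_isKInvolution_support_subset (by lia)]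
  refine (card_equiv (Equiv.mulLeft (swap a b)) fun t => ?_).symm
  simpa only [mem_filter_univ, coe_mulLeft] using (isKInvolution_swap_mul_and_inter_iff ha hb).symm

theorem apply_notMem_of_support_inter_eq_singleton {a : α} {S : Finset α} {r : Perm α}
    (hS : r.support ∩ S = {a}) : r a ∉ S := by
  intro hraS
  have ha : a ∈ r.support := (mem_inter.1 (hS ▸ mem_singleton_self a)).1
  have hra : r a ∈ r.support ∩ S := mem_inter.2 ⟨apply_mem_support.2 ha, hraS⟩
  rw [hS, mem_singleton] at hra
  exact mem_support.1 ha hra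

theorem card_isKInvolution_support_inter_eq_singleton {a : α} {S : Finset α}
    (ha : a ∈ S) (hS : 2 * k + 1 ≤ #Sᶜ) :
    #{r : Perm α | IsKInvolution (k + 1) r ∧ r.support ∩ S = {a}} =
      #Sᶜ * invCount (#Sᶜ - 1) k := by
  rw [card_eq_sum_card_fiberwise (f := fun r => r a) (t := Sᶜ)]
  · refine sum_const_nat fun b hb => ?_
    rw [← card_isKInvolution_support_inter_eq_singleton_apply_eq ha (mem_compl.1 hb) hS,
      filter_filter]
    simp only [and_assoc]
  · intro r hr
    exact mem_compl.2
      (apply_notMem_of_support_inter_eq_singleton ((mem_filter_univ r).1 hr).2)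

theorem card_isKInvolution_card_support_inter_eq_one {S : Finset α} (hS : 2 * k + 1 ≤ #Sᶜ) :
    #{r : Perm α | IsKInvolution (k + 1) r ∧ #(r.support ∩ S) = 1} =
      #S * (#Sᶜ * invCount (#Sᶜ - 1) k) := by
  rw [card_eq_sum_card_fiberwise (f := fun r => r.support ∩ S) (t := S.powersetCard 1)]
  · rw [powersetCard_one, sum_map]
    refine sum_const_nat fun a ha => ?_
    rw [← card_isKInvolution_support_inter_eq_singleton ha hS, filter_filter]
    refine congrArg card (filter_congr fun r _ => ?_)
    simp +contextual [and_assoc]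
  · intro r hr
    exact mem_powersetCard.2 ⟨inter_subset_right, ((mem_filter_univ r).1 hr).2⟩

theorem count_involutions_one_common_point_general (hk : 1 ≤ k) (hkα : 2 * k ≤ Fintype.card α)
    (S : Finset α) (hS : #S + 2 * k ≤ Fintype.card α + 1) :
    #{r : Perm α | orderOf r = 2 ∧ #r.support = 2 * k ∧ #(r.support ∩ S) = 1} =
        #S * (Fintype.card α - #S) * invCount (Fintype.card α - #S - 1) (k - 1) ∧
      #{r : Perm α | orderOf r = 2 ∧ #r.support = 2 * k} = invCount (Fintype.card α) k := by
  obtain ⟨j, rfl⟩ := Nat.exists_eq_add_of_le' hk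
  have hSc : 2 * j + 1 ≤ #Sᶜ := by rw [card_compl]; lia
  simp only [← and_assoc, ← isKInvolution_iff_orderOf_eq_two j.succ_ne_zero]
  refine ⟨?_, card_isKInvolution hkα⟩
  rw [card_isKInvolution_card_support_inter_eq_one hSc, card_compl, Nat.add_sub_cancel, mul_assoc]

end

/-- For `k ≥ 1`, `n ≥ 4k − 1` and a `k`-involution `s ∈ Sym_n`, the number
of `k`-involutions `r` with `|supp r ∩ supp s| = 1` equals `2k·(n−2k)·inv(n−2k−1, k−1)`,
and the total number of `k`-involutions in `Sym_n` equals `inv(n,k)`. -/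
theorem count_involutions_one_common_point (n k : ℕ) (hk : 1 ≤ k) (hn : 4 * k - 1 ≤ n)
    (s : Equiv.Perm (Fin n)) (hs : orderOf s = 2) (hsupp : s.support.card = 2 * k) :
    (Finset.univ.filter (fun r : Equiv.Perm (Fin n) =>
        orderOf r = 2 ∧ r.support.card = 2 * k ∧ (r.support ∩ s.support).card = 1)).card
      = 2 * k * (n - 2 * k) * invCount (n - 2 * k - 1) (k - 1) ∧
    (Finset.univ.filter (fun r : Equiv.Perm (Fin n) =>
        orderOf r = 2 ∧ r.support.card = 2 * k)).card = invCount n k := by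
  simpa [hsupp] using count_involutions_one_common_point_general hk
    (by rw [Fintype.card_fin]; lia) s.support (by rw [hsupp, Fintype.card_fin]; lia)
end

section
/- Let n ≥ 9 be a natural number, k an integer with 1 ≤ k ≤ 2√n/3, 0 < ε < 1, G either Alt_n or Sym_n, and s ∈ G a k-involution. Set Z := ⌈(3n/5)·⌈3 log(ε^{−1})⌉⌉, where log is the natural logarithm. If c_1, …, c_Z are independent, uniformly distributed random elements of the conjugacy class s^G, then with probability at least 1 − ε at least ⌈3 log(ε^{−1})⌉ of the c_i do not commute with s. -/
open scoped Classical

/-!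
Among the conjugates `r` of `s`, the number that move `a` and fix `b` is the same for every pair
`a ≠ b`, because the conjugating group is 2-transitive. Counting triples `(r, a, b)` in two ways
shows that this number is the fraction `m (n - m) / (n (n - 1))` of the class, where `m` is the size
of the support. If `s x ≠ x`, a conjugate that moves one of `x`, `s x` and fixes the other does not
commute with `s`, so a uniform conjugate fails to commute with probability at least
`2 m (n - m) / (n (n - 1))`, which is at least `24 / (7 n)` when `n ≥ 8` and `2 ≤ m ≤ n - 2`.
Bounding `(1/2) ^ #hits` in mean (Chernoff's method) then controls the probability of fewer than
`⌈3 log ε⁻¹⌉` hits in `Z` independent trials.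
-/

section Chernoff

open scoped Finset

variable {ι β : Type*} [Fintype ι] [DecidableEq ι] [Fintype β] (P : β → Prop) [DecidablePred P]

lemma sum_pow_card_filter {R : Type*} [CommSemiring R] (t : R) :
    ∑ f : ι → β, t ^ #{i | P (f i)} = (∑ b, if P b then t else 1) ^ Fintype.card ι := by
  simp only [← Finset.card_univ, ← Finset.prod_const, Finset.prod_univ_sum,
    Fintype.piFinset_univ, Finset.prod_filter]

lemma card_filter_lt_mul_pow_le (m : ℕ) {t : ℝ} (ht0 : 0 ≤ t) (ht1 : t ≤ 1) :
    #{f : ι → β | #{i | P (f i)} < m} * t ^ m ≤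
      (Fintype.card β - (1 - t) * #{b | P b}) ^ Fintype.card ι := by
  have weight_sum : (Fintype.card β - (1 - t) * #{b | P b} : ℝ) = ∑ b, if P b then t else 1 := by
    have weight (b : β) : (if P b then t else 1) = 1 - (1 - t) * if P b then 1 else 0 := by
      split_ifs <;> ring
    simp_rw [weight, Finset.sum_sub_distrib, ← Finset.mul_sum, Finset.sum_boole]
    simp
  rw [weight_sum, ← sum_pow_card_filter, ← nsmul_eq_mul, ← Finset.sum_const]
  calc ∑ f : ι → β with #{i | P (f i)} < m, t ^ m
      ≤ ∑ f : ι → β with #{i | P (f i)} < m, t ^ #{i | P (f i)} :=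
        Finset.sum_le_sum fun f hf ↦
          pow_le_pow_of_le_one ht0 ht1 (Finset.mem_filter.mp hf).2.le
    _ ≤ ∑ f : ι → β, t ^ #{i | P (f i)} :=
        Finset.sum_le_sum_of_subset_of_nonneg (Finset.filter_subset _ _)
          fun f _ _ ↦ pow_nonneg ht0 _

variable {P}

lemma card_filter_lt_le_two_pow_mul_exp {p : ℝ} (hp : p * Fintype.card β ≤ #{b | P b}) (m : ℕ) :
    #{f : ι → β | #{i | P (f i)} < m} ≤
      2 ^ m * Real.exp (-(p * Fintype.card ι / 2)) * Fintype.card (ι → β) := by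
  have card_le : (#{b | P b} : ℝ) ≤ Fintype.card β := mod_cast Finset.card_le_univ _
  have mean_le : Fintype.card β - (1 - 1 / 2) * #{b | P b} ≤
      Fintype.card β * Real.exp (-(p / 2)) := by
    have := mul_le_mul_of_nonneg_left (Real.one_sub_le_exp_neg (p / 2))
      (Nat.cast_nonneg (α := ℝ) (Fintype.card β))
    linarith
  have markov := card_filter_lt_mul_pow_le (ι := ι) P m (t := 1 / 2) (by norm_num) (by norm_num)
  calc (#{f : ι → β | #{i | P (f i)} < m} : ℝ)
      = 2 ^ m * (#{f : ι → β | #{i | P (f i)} < m} * (1 / 2) ^ m) := by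
        rw [one_div, inv_pow]; field_simp
    _ ≤ 2 ^ m * (Fintype.card β * Real.exp (-(p / 2))) ^ Fintype.card ι := by
        gcongr
        exact markov.trans (pow_le_pow_left₀ (by linarith) mean_le _)
    _ = 2 ^ m * Real.exp (-(p * Fintype.card ι / 2)) * Fintype.card (ι → β) := by
        rw [mul_pow, ← Real.exp_nat_mul, Fintype.card_fun, Nat.cast_pow]
        ring_nf

lemma one_sub_le_card_filter_div_card [Nonempty β] {p ε : ℝ} {m : ℕ}
    (hp : p * Fintype.card β ≤ #{b | P b})
    (hε : 2 ^ m * Real.exp (-(p * Fintype.card ι / 2)) ≤ ε) :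
    1 - ε ≤ (#{f : ι → β | m ≤ #{i | P (f i)}} : ℝ) / Fintype.card (ι → β) := by
  have card_pos : (0 : ℝ) < Fintype.card (ι → β) := mod_cast Fintype.card_pos
  have card_add : (#{f : ι → β | m ≤ #{i | P (f i)}} : ℝ) + #{f : ι → β | #{i | P (f i)} < m} =
      Fintype.card (ι → β) := by
    simp only [← not_le]
    exact_mod_cast Finset.card_filter_add_card_filter_not (s := Finset.univ) _
  rw [le_div_iff₀ card_pos]
  linarith [card_filter_lt_le_two_pow_mul_exp (ι := ι) hp m,
    mul_le_mul_of_nonneg_right hε card_pos.le]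

end Chernoff

-- The constant works because `36 / 35 ≥ log 2 + 1 / 3`.
lemma two_pow_mul_exp_neg_le {ε : ℝ} (hε : 0 < ε) {m : ℕ} (hm : 3 * Real.log ε⁻¹ ≤ m) :
    2 ^ m * Real.exp (-(36 / 35 * m)) ≤ ε := by
  have exponent_le : m * Real.log 2 - 36 / 35 * m ≤ Real.log ε := by
    rw [Real.log_inv] at hm
    nlinarith [Real.log_two_lt_d9, Nat.cast_nonneg (α := ℝ) m]
  calc (2 : ℝ) ^ m * Real.exp (-(36 / 35 * m))
      = Real.exp (m * Real.log 2 - 36 / 35 * m) := by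
        rw [sub_eq_add_neg, Real.exp_add, Real.exp_nat_mul, Real.exp_log two_pos]
    _ ≤ Real.exp (Real.log ε) := Real.exp_le_exp.mpr exponent_le
    _ = ε := Real.exp_log hε

section Conjugates

open Equiv
open scoped Finset

variable {α : Type*} [Fintype α] [DecidableEq α]

lemma card_moved_fixed_pairs (r : Perm α) :
    #{p : α × α | r p.1 ≠ p.1 ∧ r p.2 = p.2} =
      #r.support * (Fintype.card α - #r.support) := by
  rw [← Finset.card_compl, ← Finset.card_product]
  congr 1
  ext p
  simp

/-- The set of conjugates of `s` by elements of `H`, as a type; it is the conjugacy class `s^H`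
whenever `s ∈ H`. -/
abbrev ConjugatesBy (H : Subgroup (Perm α)) (s : Perm α) : Type _ :=
  {r : Perm α // ∃ g ∈ H, r = g⁻¹ * s * g}

namespace ConjugatesBy

variable {H : Subgroup (Perm α)} {s : Perm α}

instance : Nonempty (ConjugatesBy H s) := ⟨⟨s, 1, H.one_mem, by simp⟩⟩

lemma card_support (r : ConjugatesBy H s) : #r.1.support = #s.support := by
  obtain ⟨_, g, -, rfl⟩ := r
  simpa using Perm.card_support_conj (σ := g⁻¹) (τ := s)

variable (H s) in
/-- The conjugates of `s` that move `a` and fix `b`. Their number is the same for all `a ≠ b` when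
`H` is 2-transitive, and none of them commutes with `s` when `b = s a` or `a = s b`. -/
noncomputable def movingFixing (a b : α) : Finset (ConjugatesBy H s) := {r | r.1 a ≠ a ∧ r.1 b = b}

lemma mem_movingFixing {a b : α} {r : ConjugatesBy H s} :
    r ∈ movingFixing H s a b ↔ r.1 a ≠ a ∧ r.1 b = b := by
  simp [movingFixing]

lemma card_movingFixing_le_smul (g : H) (a b : α) :
    #(movingFixing H s a b) ≤ #(movingFixing H s (g • a) (g • b)) := by
  have conj_mem (r : ConjugatesBy H s) :
      ∃ h ∈ H, (g : Perm α) * r.1 * (g : Perm α)⁻¹ = h⁻¹ * s * h := by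
    obtain ⟨_, h, hh, rfl⟩ := r
    exact ⟨h * (g : Perm α)⁻¹, H.mul_mem hh (H.inv_mem g.2), by group⟩
  refine Finset.card_le_card_of_injOn (fun r ↦ ⟨g * r.1 * (g : Perm α)⁻¹, conj_mem r⟩) ?_ ?_
  · intro r hr
    simpa [mem_movingFixing, Subgroup.smul_def] using hr
  · intro r _ r' _ h
    exact Subtype.ext (by simpa using h)

lemma card_movingFixing_eq [MulAction.IsMultiplyPretransitive H α 2] {a b c d : α}
    (hab : a ≠ b) (hcd : c ≠ d) :
    #(movingFixing H s a b) = #(movingFixing H s c d) := by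
  have le_of_ne {a b c d : α} (hab : a ≠ b) (hcd : c ≠ d) :
      #(movingFixing H s a b) ≤ #(movingFixing H s c d) := by
    obtain ⟨g, rfl, rfl⟩ :=
      MulAction.is_two_pretransitive_iff.mp ‹MulAction.IsMultiplyPretransitive H α 2› hab hcd
    exact card_movingFixing_le_smul g a b
  exact (le_of_ne hab hcd).antisymm (le_of_ne hcd hab)

lemma card_mul_card_support_mul [MulAction.IsMultiplyPretransitive H α 2] {a b : α}
    (hab : a ≠ b) :
    Fintype.card (ConjugatesBy H s) * (#s.support * (Fintype.card α - #s.support)) =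
      Fintype.card α * (Fintype.card α - 1) * #(movingFixing H s a b) := by
  have card_pairs : #(Finset.univ : Finset α).offDiag =
      Fintype.card α * (Fintype.card α - 1) := by
    rw [Finset.offDiag_card, Finset.card_univ, Nat.mul_sub_one]
  rw [← Finset.card_univ (α := ConjugatesBy H s), ← card_pairs]
  refine Finset.card_mul_eq_card_mul
    (fun (r : ConjugatesBy H s) (p : α × α) ↦ r.1 p.1 ≠ p.1 ∧ r.1 p.2 = p.2) (fun r _ ↦ ?_)
    fun p hp ↦ card_movingFixing_eq (Finset.mem_offDiag.mp hp).2.2 hab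
  rw [← card_support r, ← card_moved_fixed_pairs]
  congr 1
  ext p
  simp only [Finset.bipartiteAbove, Finset.mem_filter, Finset.mem_offDiag, Finset.mem_univ,
    true_and, and_iff_right_iff_imp]
  rintro ⟨moved, fixed⟩ h
  exact moved (h ▸ fixed)

lemma two_mul_card_movingFixing_le [MulAction.IsMultiplyPretransitive H α 2] {x : α}
    (hx : s x ≠ x) :
    2 * #(movingFixing H s x (s x)) ≤ #{r : ConjugatesBy H s | s * r.1 ≠ r.1 * s} := by
  have disjoint : Disjoint (movingFixing H s x (s x)) (movingFixing H s (s x) x) := by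
    simp only [Finset.disjoint_left, mem_movingFixing]
    exact fun r hr hr' ↦ hr.1 hr'.2
  rw [two_mul]
  nth_rw 2 [card_movingFixing_eq hx.symm hx]
  rw [← Finset.card_union_of_disjoint disjoint]
  refine Finset.card_le_card fun r hr ↦ Finset.mem_filter.mpr ⟨Finset.mem_univ r, fun comm ↦ ?_⟩
  have comm_apply : s (r.1 x) = r.1 (s x) := DFunLike.congr_fun comm x
  rcases Finset.mem_union.mp hr with hr | hr <;> rw [mem_movingFixing] at hr
  · exact hr.1 (s.injective (comm_apply.trans hr.2))
  · exact hr.1 (comm_apply.symm.trans (congrArg s hr.2))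

lemma two_mul_card_mul_card_support_mul_le [MulAction.IsMultiplyPretransitive H α 2]
    (hs : s ≠ 1) :
    2 * (Fintype.card (ConjugatesBy H s) * (#s.support * (Fintype.card α - #s.support))) ≤
      Fintype.card α * (Fintype.card α - 1) * #{r : ConjugatesBy H s | s * r.1 ≠ r.1 * s} := by
  obtain ⟨x, hx⟩ : ∃ x, s x ≠ x := by
    by_contra! h
    exact hs (Perm.ext h)
  rw [card_mul_card_support_mul hx.symm, mul_left_comm]
  exact Nat.mul_le_mul_left _ (two_mul_card_movingFixing_le hx)

lemma card_le_card_filter_not_commute [MulAction.IsMultiplyPretransitive H α 2]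
    (hα : 8 ≤ Fintype.card α) (hs : s ≠ 1) (hsupp : #s.support + 2 ≤ Fintype.card α) :
    24 / (7 * Fintype.card α : ℝ) * Fintype.card (ConjugatesBy H s) ≤
      #{r : ConjugatesBy H s | s * r.1 ≠ r.1 * s} := by
  have count := two_mul_card_mul_card_support_mul_le (H := H) hs
  have hm : 2 ≤ #s.support := Perm.two_le_card_support_of_ne_one hs
  have moved_mul_fixed_ge : 12 * (Fintype.card α - 1) ≤
      7 * (#s.support * (Fintype.card α - #s.support)) := by
    obtain ⟨i, hi⟩ := Nat.exists_eq_add_of_le hm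
    obtain ⟨j, hj⟩ := Nat.exists_eq_add_of_le hsupp
    rw [show Fintype.card α - 1 = i + j + 3 by omega,
      show Fintype.card α - #s.support = j + 2 by omega, hi]
    nlinarith [Nat.zero_le (i * j)]
  have cleared : 24 * Fintype.card (ConjugatesBy H s) ≤
      7 * Fintype.card α * #{r : ConjugatesBy H s | s * r.1 ≠ r.1 * s} := by
    refine Nat.le_of_mul_le_mul_right (c := Fintype.card α - 1) ?_ (by omega)
    linarith [Nat.mul_le_mul_left (Fintype.card (ConjugatesBy H s)) moved_mul_fixed_ge]
  have n_pos : (0 : ℝ) < 7 * Fintype.card α := by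
    exact_mod_cast (by omega : 0 < 7 * Fintype.card α)
  rw [div_mul_eq_mul_div, div_le_iff₀' n_pos]
  exact_mod_cast cleared

end ConjugatesBy

lemma isMultiplyPretransitive_two_of_alternatingGroup_le {H : Subgroup (Perm α)}
    (hα : 4 ≤ Fintype.card α) (hH : alternatingGroup α ≤ H) :
    MulAction.IsMultiplyPretransitive H α 2 := by
  rw [← Nat.card_eq_fintype_card] at hα
  have := alternatingGroup.isMultiplyPretransitive α
  have : MulAction.IsMultiplyPretransitive (alternatingGroup α) α 2 :=
    MulAction.isMultiplyPretransitive_of_le (n := Nat.card α - 2) (by omega) (Nat.sub_le _ _)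
  refine MulAction.is_two_pretransitive_iff.mpr fun hab hcd ↦ ?_
  obtain ⟨g, hg⟩ := MulAction.is_two_pretransitive_iff.mp this hab hcd
  exact ⟨⟨g, hH g.2⟩, hg⟩

theorem enough_nonCommuting_conjugates_general {H : Subgroup (Perm α)}
    [MulAction.IsMultiplyPretransitive H α 2] (hα : 8 ≤ Fintype.card α) {s : Perm α}
    (hs : s ≠ 1) (hsupp : #s.support + 2 ≤ Fintype.card α) {ε : ℝ} (hε : 0 < ε) {m Z : ℕ}
    (hm : 3 * Real.log ε⁻¹ ≤ m) (hZ : 3 * (Fintype.card α : ℝ) / 5 * m ≤ Z) :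
    1 - ε ≤ (#{f : Fin Z → ConjugatesBy H s |
        m ≤ #{i | s * (f i).1 ≠ (f i).1 * s}} : ℝ) / Fintype.card (Fin Z → ConjugatesBy H s) := by
  have : Nonempty α := Fintype.card_pos_iff.mp (by omega)
  have exponent_ge : 36 / 35 * (m : ℝ) ≤ 24 / (7 * Fintype.card α) * Fintype.card (Fin Z) / 2 := by
    rw [Fintype.card_fin]
    calc 36 / 35 * (m : ℝ)
        = 24 / (7 * Fintype.card α) * (3 * Fintype.card α / 5 * m) / 2 := by field_simp; ring
      _ ≤ 24 / (7 * Fintype.card α) * Z / 2 := by gcongr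
  have tail_le :
      2 ^ m * Real.exp (-(24 / (7 * Fintype.card α) * Fintype.card (Fin Z) / 2)) ≤ ε := by
    refine le_trans ?_ (two_pow_mul_exp_neg_le hε hm)
    gcongr
  exact one_sub_le_card_filter_div_card (P := fun r : ConjugatesBy H s ↦ s * r.1 ≠ r.1 * s)
    (ConjugatesBy.card_le_card_filter_not_commute hα hs hsupp) tail_le

end Conjugates

lemma two_mul_add_two_le_of_le_sqrt {n k : ℕ} (hn : 9 ≤ n)
    (hk : (k : ℝ) ≤ 2 * Real.sqrt n / 3) : 2 * k + 2 ≤ n := by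
  have three_le_sqrt : 3 ≤ Real.sqrt n :=
    Real.le_sqrt_of_sq_le (by norm_num; exact_mod_cast hn)
  have : (2 * k + 2 : ℝ) ≤ n := by
    nlinarith [Real.sq_sqrt (Nat.cast_nonneg (α := ℝ) n)]
  exact_mod_cast this

/-- Let `n ≥ 9`, `1 ≤ k ≤ 2√n/3`, `0 < ε < 1`, `G ∈ {Alt_n, Sym_n}`,
`s ∈ G` a `k`-involution and `Z = ⌈(3n/5)·⌈3 log ε⁻¹⌉⌉`.  Among all `Z`-tuples of elements
of the conjugacy class `s^G` (each tuple equally likely, modelling independent uniform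
random conjugates), the proportion of tuples containing at least `⌈3 log ε⁻¹⌉` entries not
commuting with `s` is at least `1 − ε`. -/
theorem enough_nonCommuting_conjugates (n : ℕ) (hn : 9 ≤ n)
    (k : ℕ) (hk1 : 1 ≤ k) (hk2 : (k : ℝ) ≤ 2 * Real.sqrt n / 3)
    (ε : ℝ) (hε0 : 0 < ε) (hε1 : ε < 1)
    (H : Subgroup (Equiv.Perm (Fin n))) (hH : H = ⊤ ∨ H = alternatingGroup (Fin n))
    (s : Equiv.Perm (Fin n)) (hsH : s ∈ H) (hs : orderOf s = 2)
    (hsupp : s.support.card = 2 * k)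
    (Z : ℕ) (hZ : Z = ⌈(3 * (n : ℝ) / 5) * ((⌈3 * Real.log ε⁻¹⌉₊ : ℕ) : ℝ)⌉₊) :
    1 - ε ≤
      ((Finset.univ.filter
          (fun f : Fin Z → {r : Equiv.Perm (Fin n) // ∃ g ∈ H, r = g⁻¹ * s * g} =>
            ⌈3 * Real.log ε⁻¹⌉₊ ≤ (Finset.univ.filter (fun i : Fin Z =>
              s * ((f i : Equiv.Perm (Fin n))) ≠ ((f i : Equiv.Perm (Fin n))) * s)).card)).card : ℝ) /
        (Fintype.card (Fin Z → {r : Equiv.Perm (Fin n) // ∃ g ∈ H, r = g⁻¹ * s * g}) : ℝ) := by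
  have hsupp_le : s.support.card + 2 ≤ Fintype.card (Fin n) := by
    simpa [hsupp] using two_mul_add_two_le_of_le_sqrt hn hk2
  have := isMultiplyPretransitive_two_of_alternatingGroup_le (α := Fin n) (H := H)
    (by rw [Fintype.card_fin]; omega) (by rcases hH with rfl | rfl <;> simp)
  exact enough_nonCommuting_conjugates_general (by rw [Fintype.card_fin]; omega)
    (fun h ↦ by simp [h] at hs) hsupp_le hε0 (Nat.le_ceil _)
    (by rw [hZ, Fintype.card_fin]; exact Nat.le_ceil _)
end

section
/- Let n ≥ 9 be a natural number, k an integer with 1 ≤ k ≤ 2√n/3, 0 < ε < 1, G either Alt_n or Sym_n, and s ∈ G a k-involution. Set Z := ⌈3 log(ε^{−1})⌉, where log is the natural logarithm. Let M be the set of elements of the conjugacy class s^G that do not commute with s. If r_1, …, r_Z are independent, uniformly distributed random elements of M, then with probability at least 1 − ε there is some i such that (s·r_i)² is a 3-cycle. -/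
open scoped Classical

/-!
Only the way the supports of `s` and of a random conjugate `r` meet matters. If they meet in exactly
one point then `(s * r) ^ 2` is a `3`-cycle, and if they are disjoint then `s` and `r` commute.
Conjugates are equidistributed over the possible supports, so with `K = 2k` the number of conjugates
whose support meets that of `s` in `j` points is proportional to the hypergeometric weight
`N j = K.choose j * (n - K).choose (K - j)`. The bound `9 * K ^ 2 ≤ 16 * n` makes these weights
decay fast enough that `∑ j ≥ 1, N j ≤ 7 / 2 * N 1`. Hence a uniform element of `M` succeeds with
probability at least `2 / 7`, and `5 / 7 ≤ exp (-1 / 3)` turns `3 * log ε⁻¹` independent trials into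
a failure probability of at most `ε`.
-/

open Finset Equiv.Perm

section Hypergeometric

/-- The number of `K`-element subsets of a `(K + m)`-element set that meet a fixed `K`-element
subset in exactly `j` points. For `j > K` the first factor vanishes, so that the truncated
subtraction in the second is harmless. -/
def overlapCount (K m j : ℕ) : ℕ :=
  K.choose j * m.choose (K - j)

lemma cast_choose_succ_mul (n k : ℕ) :
    (n.choose (k + 1) : ℚ) * (k + 1) = n.choose k * (n - k) := by
  rcases le_or_gt k n with hkn | hnk
  · have h := n.choose_succ_right_eq k
    rw [← Nat.cast_sub hkn]
    exact_mod_cast h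
  · simp [Nat.choose_eq_zero_of_lt hnk, Nat.choose_eq_zero_of_lt (hnk.trans k.lt_succ_self)]

lemma overlapCount_succ_mul (K m j : ℕ) :
    (overlapCount K m (j + 1) : ℚ) * ((j + 1) * (m - K + j + 1)) =
      overlapCount K m j * (K - j) ^ 2 := by
  have hK := cast_choose_succ_mul K j
  rcases lt_or_ge j K with hjK | hKj
  · obtain ⟨t, rfl⟩ := Nat.exists_eq_add_of_lt hjK
    have hm := cast_choose_succ_mul m t
    have hsub : j + t + 1 - j = t + 1 := by lia
    have hsub' : j + t + 1 - (j + 1) = t := by lia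
    simp only [overlapCount, hsub, hsub']
    push_cast at hK ⊢
    linear_combination (m.choose t : ℚ) * (m - t) * hK -
      ((j + t + 1).choose j : ℚ) * (t + 1) * hm
  · have hzero : K.choose (j + 1) = 0 := Nat.choose_eq_zero_of_lt (Nat.lt_succ_of_le hKj)
    simp only [overlapCount, hzero, Nat.cast_zero, zero_mul, Nat.cast_mul] at hK ⊢
    linear_combination (m.choose (K - j) : ℚ) * (K - j) * hK

lemma overlapCount_succ_mul_le {K m j : ℕ} {c : ℚ} (hpos : (0 : ℚ) < m - K + j + 1)
    (hc : ((K : ℚ) - j) ^ 2 ≤ c * (m - K + j + 1)) :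
    (overlapCount K m (j + 1) : ℚ) * (j + 1) ≤ c * overlapCount K m j := by
  refine le_of_mul_le_mul_right ?_ hpos
  calc (overlapCount K m (j + 1) : ℚ) * (j + 1) * (m - K + j + 1)
      = overlapCount K m j * (K - j) ^ 2 := by rw [← overlapCount_succ_mul, mul_assoc]
    _ ≤ overlapCount K m j * (c * (m - K + j + 1)) := mul_le_mul_of_nonneg_left hc (by simp)
    _ = c * overlapCount K m j * (m - K + j + 1) := by ring

lemma overlapCount_succ_mul_le_of_two_le {K m j : ℕ} (hKm : 9 * K ^ 2 ≤ 16 * (K + m))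
    (hj : 2 ≤ j) :
    (overlapCount K m (j + 1) : ℚ) * (j + 1) ≤ 16 / 9 * overlapCount K m j := by
  rcases lt_or_ge j K with hjK | hKj
  · have hKm' : (9 : ℚ) * K ^ 2 ≤ 16 * (K + m) := by exact_mod_cast hKm
    have hj' : (2 : ℚ) ≤ j := by exact_mod_cast hj
    have hjK' : (j : ℚ) ≤ K := by exact_mod_cast hjK.le
    apply overlapCount_succ_mul_le <;> nlinarith
  · have hzero : overlapCount K m (j + 1) = 0 := by
      rw [overlapCount, Nat.choose_eq_zero_of_lt (Nat.lt_succ_of_le hKj), zero_mul]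
    rw [hzero, Nat.cast_zero, zero_mul]
    positivity

lemma overlapCount_two_le {K m : ℕ} (hKm : 9 * K ^ 2 ≤ 16 * (K + m)) (hne : ¬(K = 4 ∧ m = 5)) :
    (overlapCount K m 2 : ℚ) ≤ 6 / 5 * overlapCount K m 1 := by
  have hquad : 5 * K ^ 2 + 2 * K ≤ 12 * m + 19 := by
    rcases le_or_gt K 6 with hK | hK
    · interval_cases K <;> lia
    · nlinarith
  have hKm' : (9 : ℚ) * K ^ 2 ≤ 16 * (K + m) := by exact_mod_cast hKm
  have hquad' : (5 : ℚ) * K ^ 2 + 2 * K ≤ 12 * m + 19 := by exact_mod_cast hquad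
  have hstep : (overlapCount K m 2 : ℚ) * ((1 : ℕ) + 1) ≤ 12 / 5 * overlapCount K m 1 :=
    overlapCount_succ_mul_le (by push_cast; nlinarith [sq_nonneg (9 * (K : ℚ) - 16)])
      (by push_cast; linarith)
  rw [Nat.cast_one] at hstep
  linarith

lemma one_sub_mul_sum_range_le {R : Type*} [CommRing R] [PartialOrder R] [IsOrderedRing R]
    {a : ℕ → R} {q : R} (h : ∀ i, a (i + 1) ≤ q * a i) (m : ℕ) :
    (1 - q) * ∑ i ∈ range m, a i ≤ a 0 - a m := by
  induction m with
  | zero => simp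
  | succ m ih =>
    calc (1 - q) * ∑ i ∈ range (m + 1), a i
        = (1 - q) * ∑ i ∈ range m, a i + (a m - q * a m) := by rw [sum_range_succ]; ring
      _ ≤ (a 0 - a m) + (a m - a (m + 1)) := add_le_add ih (sub_le_sub_left (h m) _)
      _ = a 0 - a (m + 1) := by ring

lemma two_mul_sum_overlapCount_le {K m : ℕ} (hKm : 9 * K ^ 2 ≤ 16 * (K + m)) :
    2 * ∑ j ∈ Icc 1 K, overlapCount K m j ≤ 7 * overlapCount K m 1 := by
  by_cases hne : K = 4 ∧ m = 5
  · obtain ⟨rfl, rfl⟩ := hne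
    decide
  have h₂ := overlapCount_two_le hKm hne
  have h₃ : (overlapCount K m 3 : ℚ) ≤ 16 / 27 * overlapCount K m 2 := by
    have hstep := overlapCount_succ_mul_le_of_two_le hKm le_rfl
    rw [Nat.cast_ofNat] at hstep
    linarith
  have hratio (i : ℕ) : (overlapCount K m (i + 1 + 3) : ℚ) ≤ 4 / 9 * overlapCount K m (i + 3) := by
    have hstep := overlapCount_succ_mul_le_of_two_le hKm (show 2 ≤ i + 3 by lia)
    have hi : (0 : ℚ) ≤ overlapCount K m (i + 3 + 1) * i := by positivity
    rw [add_right_comm i 1 3]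
    push_cast at hstep
    linarith
  have htail : ∑ i ∈ range K, (overlapCount K m (i + 3) : ℚ) ≤ 9 / 5 * overlapCount K m 3 := by
    have hgeom :=
      one_sub_mul_sum_range_le (a := fun i => (overlapCount K m (i + 3) : ℚ)) hratio K
    have hlast : (0 : ℚ) ≤ overlapCount K m (K + 3) := Nat.cast_nonneg _
    rw [zero_add] at hgeom
    linarith
  have hsum : ∑ j ∈ Icc 1 K, overlapCount K m j ≤
      ∑ i ∈ range K, overlapCount K m (i + 3) + overlapCount K m 2 + overlapCount K m 1 :=
    calc ∑ j ∈ Icc 1 K, overlapCount K m j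
        ≤ ∑ j ∈ Ico 1 (K + 3), overlapCount K m j :=
          sum_le_sum_of_subset fun j hj => by simp only [mem_Icc, mem_Ico] at hj ⊢; lia
      _ = ∑ i ∈ range (K + 2), overlapCount K m (i + 1) := by
          rw [range_eq_Ico, sum_Ico_add']
      _ = _ := by rw [sum_range_succ', sum_range_succ']
  qify at hsum
  have hbound : 2 * ∑ j ∈ Icc 1 K, (overlapCount K m j : ℚ) ≤ 7 * overlapCount K m 1 := by
    linarith
  exact_mod_cast hbound

end Hypergeometric

section Amplification

lemma one_sub_pow_le_card_exists_div_card {β : Type*} [Fintype β] [Nonempty β]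
    (P : β → Prop) {q : ℝ} (hq : (#{b | ¬P b} : ℝ) ≤ q * Fintype.card β)
    (Z : ℕ) :
    1 - q ^ Z ≤ (#{f : Fin Z → β | ∃ i, P (f i)} : ℝ) / Fintype.card (Fin Z → β) := by
  have hfail : #{f : Fin Z → β | ¬∃ i, P (f i)} = #{b | ¬P b} ^ Z := by
    rw [← Fintype.card_piFinset_const]
    congr 1
    ext f
    simp
  have hsplit := card_filter_add_card_filter_not (s := (univ : Finset (Fin Z → β)))
    (fun f => ∃ i, P (f i))
  rw [hfail, card_univ] at hsplit
  have hsplit' : (#{f : Fin Z → β | ∃ i, P (f i)} : ℝ) + (#{b | ¬P b} : ℝ) ^ Z =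
      Fintype.card (Fin Z → β) := by exact_mod_cast hsplit
  have hpow : (#{b | ¬P b} : ℝ) ^ Z ≤
      q ^ Z * Fintype.card (Fin Z → β) := by
    rw [Fintype.card_fun, Fintype.card_fin, Nat.cast_pow, ← mul_pow]
    gcongr
  rw [le_div_iff₀ (by exact_mod_cast Fintype.card_pos)]
  linarith

lemma five_sevenths_pow_le {ε : ℝ} (hε : 0 < ε) {Z : ℕ} (hZ : 3 * Real.log ε⁻¹ ≤ Z) :
    (5 / 7 : ℝ) ^ Z ≤ ε := by
  have hlog : 3 * Real.log (5 / 7) ≤ -1 := by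
    have he : Real.exp 1 ≤ ((5 / 7 : ℝ) ^ 3)⁻¹ := by
      linarith [Real.exp_one_lt_d9, show (2.744 : ℝ) = ((5 / 7 : ℝ) ^ 3)⁻¹ by norm_num]
    rw [← Real.le_log_iff_exp_le (by positivity), Real.log_inv, Real.log_pow] at he
    push_cast at he
    linarith
  rw [← Real.log_le_log_iff (by positivity) hε, Real.log_pow]
  rw [Real.log_inv] at hZ
  nlinarith [mul_le_mul_of_nonneg_left hlog (Nat.cast_nonneg (α := ℝ) Z)]

end Amplification

section Perm

variable {α : Type*}

lemma apply_apply_of_sq_eq_one {s : Equiv.Perm α} (hs : s ^ 2 = 1) (x : α) : s (s x) = x := by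
  rw [← mul_apply, ← sq, hs, one_apply]

lemma exists_perm_map_eq {A B : Finset α} (h : #A = #B) :
    ∃ σ : Equiv.Perm α, A.map σ.toEmbedding = B := by
  obtain ⟨σ, hσ⟩ := Set.powersetCard.isPretransitive.exists_smul_eq
    (⟨A, rfl⟩ : Set.powersetCard α #A) ⟨B, h.symm⟩
  exact ⟨σ, by rw [map_eq_image]; exact congrArg Subtype.val hσ⟩

variable [DecidableEq α]

lemma commute_swap_apply_of_sq_eq_one {s : Equiv.Perm α} (hs : s ^ 2 = 1) (x : α) :
    Commute s (Equiv.swap x (s x)) := by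
  rw [Commute, SemiconjBy, Equiv.mul_swap_eq_swap_mul, apply_apply_of_sq_eq_one hs,
    Equiv.swap_comm]

variable [Fintype α]

/- Split the transposition `τ = swap x (r x)` at the common point `x` off `r`. The rest `r' = τ * r`
is an involution commuting with `s` and `τ`, so it cancels: `(s * r) ^ 2 = s * τ * s⁻¹ * τ`. -/
lemma isThreeCycle_sq_mul_of_card_inter_support_eq_one {s r : Equiv.Perm α} (hs : s ^ 2 = 1)
    (hr : r ^ 2 = 1) (h : #(s.support ∩ r.support) = 1) : ((s * r) ^ 2).IsThreeCycle := by
  obtain ⟨x, hx⟩ := card_eq_one.mp h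
  have hmem (p : α) : s p ≠ p ∧ r p ≠ p ↔ p = x := by
    rw [← mem_support, ← mem_support, ← mem_inter, hx, mem_singleton]
  obtain ⟨hsx, hrx⟩ := (hmem x).mpr rfl
  have hsrx : s (r x) = r x := by
    by_contra hmoved
    exact hrx ((hmem (r x)).mp ⟨hmoved, by rw [apply_apply_of_sq_eq_one hr]; exact hrx.symm⟩)
  have hne : s x ≠ r x := fun heq => hrx (s.injective (hsrx.trans heq.symm))
  set τ := Equiv.swap x (r x) with hτ
  obtain ⟨r', hr'⟩ : ∃ r', r' = τ * r := ⟨_, rfl⟩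
  have hττ : τ * τ = 1 := Equiv.swap_mul_self x (r x)
  have hr_eq : r = τ * r' := by rw [hr', ← mul_assoc, hττ, one_mul]
  have hrτ : Commute r τ := commute_swap_apply_of_sq_eq_one hr x
  have hr'τ : Commute r' τ := hr' ▸ (Commute.refl τ).mul_left hrτ
  have hr'r' : r' * r' = 1 := by
    rw [hr', hrτ.mul_mul_mul_comm, hττ, ← sq, hr, one_mul]
  have hsr' : Commute s r' := by
    refine Equiv.Perm.Disjoint.commute fun p => or_iff_not_imp_left.mpr fun hsp => ?_
    rcases eq_or_ne p x with rfl | hpx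
    · rw [hr', mul_apply, hτ, Equiv.swap_apply_right]
    · have hrp : r p = p := by
        by_contra hmoved
        exact hpx ((hmem p).mp ⟨hsp, hmoved⟩)
      rw [hr', mul_apply, hrp, hτ, Equiv.swap_apply_of_ne_of_ne hpx (by rintro rfl; exact hsp hsrx)]
  have hsq : (s * r) ^ 2 = Equiv.swap (r x) (s x) * Equiv.swap (r x) x :=
    calc (s * r) ^ 2 = s * τ * (r' * s) * (r' * τ) := by rw [hr'τ.eq, hr_eq, sq]; group
      _ = s * τ * s * (r' * r') * τ := by rw [← hsr'.eq]; group
      _ = s * τ * s⁻¹ * τ := by rw [hr'r', mul_one, ← eq_inv_of_mul_eq_one_left (sq s ▸ hs)]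
      _ = Equiv.swap (r x) (s x) * Equiv.swap (r x) x := by
        rw [hτ, ← Equiv.swap_apply_apply, hsrx, Equiv.swap_comm (s x), Equiv.swap_comm x]
  rw [hsq]
  exact isThreeCycle_swap_mul_swap_same hne.symm hrx hsx

lemma not_commute_of_isThreeCycle_sq_mul {s r : Equiv.Perm α} (hs : s ^ 2 = 1) (hr : r ^ 2 = 1)
    (h : ((s * r) ^ 2).IsThreeCycle) : ¬Commute s r := fun hcomm =>
  h.ne_one (by rw [hcomm.mul_pow, hs, hr, one_mul])

lemma exists_conj_eq_iff_isConj {H : Subgroup (Equiv.Perm α)} (hH : alternatingGroup α ≤ H)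
    {s t : Equiv.Perm α} (ht : sign t = -1) (hst : Commute s t) {r : Equiv.Perm α} :
    (∃ g ∈ H, r = g⁻¹ * s * g) ↔ IsConj s r := by
  rw [isConj_iff]
  constructor
  · rintro ⟨g, -, rfl⟩
    exact ⟨g⁻¹, by rw [inv_inv]⟩
  · rintro ⟨c, rfl⟩
    rcases Int.units_eq_one_or (sign c) with hc | hc
    · exact ⟨c⁻¹, hH (by simp [mem_alternatingGroup, hc]), by rw [inv_inv]⟩
    · refine ⟨t * c⁻¹, hH (by simp [mem_alternatingGroup, hc, ht]), ?_⟩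
      calc c * s * c⁻¹ = c * (t⁻¹ * (t * s)) * c⁻¹ := by rw [inv_mul_cancel_left]
        _ = (t * c⁻¹)⁻¹ * s * (t * c⁻¹) := by rw [← hst.eq]; group

lemma card_isConj_support_eq (s : Equiv.Perm α) {A B : Finset α} (h : #A = #B) :
    #{r | IsConj s r ∧ r.support = A} = #{r | IsConj s r ∧ r.support = B} := by
  obtain ⟨σ, rfl⟩ := exists_perm_map_eq h
  refine card_equiv (MulAut.conj σ).toEquiv fun r => ?_
  have hconj : IsConj r (σ * r * σ⁻¹) := isConj_iff.mpr ⟨σ, rfl⟩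
  have hiff : IsConj s r ↔ IsConj s (σ * r * σ⁻¹) :=
    ⟨fun hsr => hsr.trans hconj, fun hsr => hsr.trans hconj.symm⟩
  have hsupp : (σ * r * σ⁻¹).support = A.map σ.toEmbedding ↔ r.support = A := by
    rw [support_conj, map_inj]
  simp only [mem_filter, mem_univ, true_and]
  exact and_congr hiff hsupp.symm

lemma card_support_eq_of_isConj {s r : Equiv.Perm α} (h : IsConj s r) :
    #r.support = #s.support := by
  obtain ⟨c, rfl⟩ := isConj_iff.mp h
  rw [support_conj, card_map]

lemma card_isConj_support_mem (s : Equiv.Perm α) (F : Finset (Finset α))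
    (hF : ∀ A ∈ F, #A = #s.support) :
    #{r | IsConj s r ∧ r.support ∈ F} = #F * #{r | IsConj s r ∧ r.support = s.support} := by
  rw [card_eq_sum_card_fiberwise (f := support) (t := F) fun r hr => by
    simpa using (mem_filter.mp hr).2.2]
  refine sum_const_nat fun A hA => ?_
  rw [← card_isConj_support_eq s (hF A hA), filter_filter]
  congr 1
  ext r
  simp only [mem_filter, mem_univ, true_and]
  exact ⟨fun h => ⟨h.1.1, h.2⟩, fun h => ⟨⟨h.1, h.2 ▸ hA⟩, h.2⟩⟩

lemma card_powersetCard_filter_card_inter_eq (S : Finset α) (i j : ℕ) :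
    #{A ∈ powersetCard (i + j) univ | #(S ∩ A) = i} = (#S).choose i * (#Sᶜ).choose j := by
  have hsplit (A : Finset α) : S ∩ A ∪ Sᶜ ∩ A = A := by
    rw [← union_inter_distrib_right, union_compl, univ_inter]
  have hcard (A : Finset α) : #(S ∩ A) + #(Sᶜ ∩ A) = #A := by
    rw [← card_union_of_disjoint (disjoint_compl_right.mono inter_subset_left inter_subset_left),
      hsplit]
  have hparts {B C : Finset α} (hB : B ⊆ S) (hC : C ⊆ Sᶜ) :
      S ∩ (B ∪ C) = B ∧ Sᶜ ∩ (B ∪ C) = C := by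
    rw [inter_union_distrib_left, inter_union_distrib_left, inter_eq_right.mpr hB,
      inter_eq_right.mpr hC, disjoint_iff_inter_eq_empty.mp (disjoint_compl_right.mono_right hC),
      disjoint_iff_inter_eq_empty.mp (disjoint_compl_left.mono_right hB)]
    exact ⟨union_empty B, empty_union C⟩
  rw [← card_powersetCard, ← card_powersetCard, ← card_product]
  refine card_nbij' (fun A => (S ∩ A, Sᶜ ∩ A)) (fun p => p.1 ∪ p.2) ?_ ?_ (fun A _ => hsplit A) ?_
  · intro A hA
    have hA' := hcard A
    simp_all [mem_powersetCard, inter_subset_left]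
  · rintro ⟨B, C⟩ hp
    simp only [coe_product, Set.mem_prod, mem_coe, mem_powersetCard] at hp
    obtain ⟨⟨hB, hBi⟩, hC, hCj⟩ := hp
    have h := hcard (B ∪ C)
    simp only [hparts hB hC] at h
    simp [mem_powersetCard, hparts hB hC, ← h, hBi, hCj]
  · rintro ⟨B, C⟩ hp
    simp only [coe_product, Set.mem_prod, mem_coe, mem_powersetCard] at hp
    obtain ⟨hS, hSc⟩ := hparts hp.1.1 hp.2.1
    exact Prod.ext hS hSc

lemma card_isConj_card_inter_support_eq (s : Equiv.Perm α) {j : ℕ} (hj : j ≤ #s.support) :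
    #{r | IsConj s r ∧ #(s.support ∩ r.support) = j} =
      overlapCount #s.support #s.supportᶜ j * #{r | IsConj s r ∧ r.support = s.support} := by
  rw [overlapCount, ← card_powersetCard_filter_card_inter_eq, Nat.add_sub_cancel' hj,
    ← card_isConj_support_mem s _ fun A hA => (mem_powersetCard.mp (mem_filter.mp hA).1).2]
  congr 1
  ext r
  simp only [mem_filter, mem_univ, true_and, mem_powersetCard, subset_univ]
  exact and_congr_right fun hr => by simp [card_support_eq_of_isConj hr]

lemma card_isConj_not_disjoint (s : Equiv.Perm α) :
    #{r | IsConj s r ∧ ¬s.Disjoint r} =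
      (∑ j ∈ Icc 1 #s.support, overlapCount #s.support #s.supportᶜ j) *
        #{r | IsConj s r ∧ r.support = s.support} := by
  have hoverlap (r : Equiv.Perm α) : ¬s.Disjoint r ↔ 1 ≤ #(s.support ∩ r.support) := by
    rw [disjoint_iff_disjoint_support, not_disjoint_iff_nonempty_inter, one_le_card]
  rw [card_eq_sum_card_fiberwise (f := fun r => #(s.support ∩ r.support))
    (t := Icc 1 #s.support), sum_mul]
  · refine sum_congr rfl fun j hj => ?_
    rw [← card_isConj_card_inter_support_eq s (mem_Icc.mp hj).2, filter_filter]
    congr 1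
    ext r
    simp only [mem_filter, mem_univ, true_and, hoverlap]
    have hj1 := (mem_Icc.mp hj).1
    grind
  · intro r hr
    have hr := (mem_filter.mp hr).2.2
    exact mem_coe.mpr (mem_Icc.mpr ⟨(hoverlap r).mp hr, card_le_card inter_subset_left⟩)

lemma two_mul_card_isConj_not_disjoint_le {s : Equiv.Perm α}
    (hs : 9 * #s.support ^ 2 ≤ 16 * Fintype.card α) :
    2 * #{r | IsConj s r ∧ ¬s.Disjoint r} ≤
      7 * #{r | IsConj s r ∧ #(s.support ∩ r.support) = 1} := by
  rcases Nat.eq_zero_or_pos #s.support with h | h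
  · rw [card_isConj_not_disjoint, h, Icc_eq_empty (by lia), sum_empty, zero_mul, mul_zero]
    exact Nat.zero_le _
  rw [card_isConj_not_disjoint, card_isConj_card_inter_support_eq s h, ← mul_assoc, ← mul_assoc]
  exact Nat.mul_le_mul_right _
    (two_mul_sum_overlapCount_le (hs.trans_eq (by rw [card_add_card_compl])))

/-- The set `M` of the elements conjugate to `s` under `H` that do not commute with `s`. -/
abbrev NoncommutingConj (H : Subgroup (Equiv.Perm α)) (s : Equiv.Perm α) : Type _ :=
  {r : Equiv.Perm α // (∃ g ∈ H, r = g⁻¹ * s * g) ∧ s * r ≠ r * s}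

section

variable {H : Subgroup (Equiv.Perm α)} {s : Equiv.Perm α}

lemma exists_conj_eq_iff_isConj_of_sq_eq_one (hH : alternatingGroup α ≤ H) (hs : s ^ 2 = 1)
    (hs1 : s ≠ 1) {r : Equiv.Perm α} : (∃ g ∈ H, r = g⁻¹ * s * g) ↔ IsConj s r := by
  obtain ⟨x, hx⟩ := DFunLike.exists_ne hs1
  exact exists_conj_eq_iff_isConj hH (sign_swap hx.symm) (commute_swap_apply_of_sq_eq_one hs x)

lemma card_noncommutingConj_le :
    Fintype.card (NoncommutingConj H s) ≤ #{r | IsConj s r ∧ ¬s.Disjoint r} := by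
  rw [Fintype.card_subtype]
  refine card_le_card (monotone_filter_right _ fun r _ ⟨⟨g, _, hg⟩, hne⟩ => ?_)
  exact ⟨isConj_iff.mpr ⟨g⁻¹, by rw [hg, inv_inv]⟩, fun hd => hne hd.commute⟩

lemma card_isConj_card_inter_support_eq_one_le (hH : alternatingGroup α ≤ H) (hs : s ^ 2 = 1)
    (hs1 : s ≠ 1) :
    #{r | IsConj s r ∧ #(s.support ∩ r.support) = 1} ≤
      #{r : NoncommutingConj H s | ((s * (r : Equiv.Perm α)) ^ 2).IsThreeCycle} := by
  rw [← card_map (Function.Embedding.subtype _)]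
  refine card_le_card fun r hr => ?_
  obtain ⟨hconj, hone⟩ := (mem_filter.mp hr).2
  have hr2 : r ^ 2 = 1 := by
    obtain ⟨c, rfl⟩ := isConj_iff.mp hconj
    rw [conj_pow, hs, mul_one, mul_inv_cancel]
  have hcycle := isThreeCycle_sq_mul_of_card_inter_support_eq_one hs hr2 hone
  exact mem_map.mpr ⟨⟨r, (exists_conj_eq_iff_isConj_of_sq_eq_one hH hs hs1).mpr hconj,
    not_commute_of_isThreeCycle_sq_mul hs hr2 hcycle⟩, mem_filter.mpr ⟨mem_univ _, hcycle⟩, rfl⟩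

variable (hH : alternatingGroup α ≤ H) (hs : s ^ 2 = 1) (hs1 : s ≠ 1)
  (hsupp : 9 * #s.support ^ 2 ≤ 16 * Fintype.card α)

include hH hs hs1 hsupp

lemma two_mul_card_noncommutingConj_le :
    2 * Fintype.card (NoncommutingConj H s) ≤
      7 * #{r : NoncommutingConj H s | ((s * (r : Equiv.Perm α)) ^ 2).IsThreeCycle} :=
  calc 2 * Fintype.card (NoncommutingConj H s)
      ≤ 2 * #{r | IsConj s r ∧ ¬s.Disjoint r} := Nat.mul_le_mul_left _ card_noncommutingConj_le
    _ ≤ 7 * #{r | IsConj s r ∧ #(s.support ∩ r.support) = 1} :=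
        two_mul_card_isConj_not_disjoint_le hsupp
    _ ≤ _ := Nat.mul_le_mul_left _ (card_isConj_card_inter_support_eq_one_le hH hs hs1)

lemma nonempty_noncommutingConj : Nonempty (NoncommutingConj H s) := by
  have hself : 0 < #{r | IsConj s r ∧ ¬s.Disjoint r} :=
    card_pos.mpr ⟨s, mem_filter.mpr ⟨mem_univ s, .refl s, by rwa [disjoint_refl_iff]⟩⟩
  have hratio := two_mul_card_isConj_not_disjoint_le hsupp
  have hgood := card_isConj_card_inter_support_eq_one_le hH hs hs1
  obtain ⟨r, -⟩ := card_pos.mp (show 0 < #{r : NoncommutingConj H s |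
    ((s * (r : Equiv.Perm α)) ^ 2).IsThreeCycle} by lia)
  exact ⟨r⟩

end

lemma nine_mul_sq_le_of_le_sqrt {K N : ℕ} (h : (K : ℝ) ≤ 4 * Real.sqrt N / 3) :
    9 * K ^ 2 ≤ 16 * N := by
  have hsq : (3 * (K : ℝ)) ^ 2 ≤ (4 * Real.sqrt N) ^ 2 :=
    pow_le_pow_left₀ (by positivity) (by linarith) 2
  rw [mul_pow 4, Real.sq_sqrt N.cast_nonneg] at hsq
  have hcast : (9 * K ^ 2 : ℝ) ≤ 16 * N := by linarith
  exact_mod_cast hcast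

theorem threeCycle_found_with_high_probability_general {H : Subgroup (Equiv.Perm α)}
    (hH : alternatingGroup α ≤ H) {s : Equiv.Perm α} (hs : orderOf s = 2)
    (hsupp : (#s.support : ℝ) ≤ 4 * Real.sqrt (Fintype.card α) / 3)
    {ε : ℝ} (hε : 0 < ε) {Z : ℕ} (hZ : 3 * Real.log ε⁻¹ ≤ Z) :
    1 - ε ≤
      (#{f : Fin Z → NoncommutingConj H s |
          ∃ i, ((s * (f i : Equiv.Perm α)) ^ 2).IsThreeCycle} : ℝ) /
        Fintype.card (Fin Z → NoncommutingConj H s) := by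
  have hs2 : s ^ 2 = 1 := hs ▸ pow_orderOf_eq_one s
  have hs1 : s ≠ 1 := fun h => by simp [h] at hs
  have hsmall := nine_mul_sq_le_of_le_sqrt hsupp
  have := nonempty_noncommutingConj hH hs2 hs1 hsmall
  let P (r : NoncommutingConj H s) : Prop := ((s * (r : Equiv.Perm α)) ^ 2).IsThreeCycle
  have hfail : (#{r | ¬P r} : ℝ) ≤ 5 / 7 * Fintype.card (NoncommutingConj H s) := by
    have hratio := two_mul_card_noncommutingConj_le hH hs2 hs1 hsmall
    have hsplit := card_filter_add_card_filter_not (s := univ) P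
    rw [card_univ] at hsplit
    have hnat : 7 * #{r | ¬P r} ≤ 5 * Fintype.card (NoncommutingConj H s) := by lia
    have hreal : (7 * #{r | ¬P r} : ℝ) ≤ 5 * Fintype.card (NoncommutingConj H s) := by
      exact_mod_cast hnat
    linarith
  calc 1 - ε ≤ 1 - (5 / 7 : ℝ) ^ Z := sub_le_sub_left (five_sevenths_pow_le hε hZ) 1
    _ ≤ _ := one_sub_pow_le_card_exists_div_card P hfail Z

end Perm

/-- Let `n ≥ 9`, `1 ≤ k ≤ 2√n/3`, `0 < ε < 1`, `G ∈ {Alt_n, Sym_n}`,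
`s ∈ G` a `k`-involution and `Z = ⌈3 log ε⁻¹⌉`.  Let `M` be the set of elements of the
conjugacy class `s^G` not commuting with `s`.  Among all `Z`-tuples of elements of `M`
(each tuple equally likely, modelling independent uniform random elements of `M`), the
proportion of tuples containing an entry `r` with `(s·r)²` a `3`-cycle is at least `1 − ε`. -/
theorem threeCycle_found_with_high_probability (n : ℕ) (hn : 9 ≤ n)
    (k : ℕ) (hk1 : 1 ≤ k) (hk2 : (k : ℝ) ≤ 2 * Real.sqrt n / 3)
    (ε : ℝ) (hε0 : 0 < ε) (hε1 : ε < 1)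
    (H : Subgroup (Equiv.Perm (Fin n))) (hH : H = ⊤ ∨ H = alternatingGroup (Fin n))
    (s : Equiv.Perm (Fin n)) (hsH : s ∈ H) (hs : orderOf s = 2)
    (hsupp : s.support.card = 2 * k)
    (Z : ℕ) (hZ : Z = ⌈3 * Real.log ε⁻¹⌉₊) :
    1 - ε ≤
      ((Finset.univ.filter
          (fun f : Fin Z →
              {r : Equiv.Perm (Fin n) // (∃ g ∈ H, r = g⁻¹ * s * g) ∧ s * r ≠ r * s} =>
            ∃ i : Fin Z, ((s * (f i : Equiv.Perm (Fin n))) ^ 2).IsThreeCycle)).card : ℝ) /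
        (Fintype.card (Fin Z →
          {r : Equiv.Perm (Fin n) // (∃ g ∈ H, r = g⁻¹ * s * g) ∧ s * r ≠ r * s}) : ℝ) := by
  refine threeCycle_found_with_high_probability_general (hH.elim (fun h => h ▸ le_top) (·.ge)) hs
    ?_ hε0 (hZ ▸ Nat.le_ceil _)
  rw [hsupp, Fintype.card_fin]
  push_cast
  linarith
end

section
/- Let c ∈ Sym_n be a 3-cycle and r ∈ Sym_n. Then r is pre-bolstering with respect to c if and only if the following three conditions hold: [c^r, c] ≠ 1, c^{(r²)} ∉ {c, c²}, and [c, c^{(r²)}] = 1. (Here a^b := b^{−1}ab and [a,b] := a^{−1}b^{−1}ab.) -/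
/-- `r` is `k`-pre-bolstering with respect to the `3`-cycle `c` if, for some labeling
`supp c = {u,v,w}`, distinct points `a 0, …, a (α−1), b 0, …, b (β−1)` outside `supp c`
with `α, β ≥ 2` and `k = α + β + 3`, the disjoint cycle form of `r` is
`(w,u,a_1,…,a_α)(v,b_1,…,b_β)(⋯)` or `(w,u,a_1,…,a_α,v,b_1,…,b_β)(⋯)`, where `(⋯)` is an
arbitrary permutation of the remaining points. -/
def IsKPreBolstering {n : ℕ} (k : ℕ) (c r : Equiv.Perm (Fin n)) : Prop :=
  ∃ (u v w : Fin n) (α β : ℕ) (a b : ℕ → Fin n),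
    c.support = {u, v, w} ∧ 2 ≤ α ∧ 2 ≤ β ∧ k = α + β + 3 ∧
    (∀ i < α, ∀ j < α, a i = a j → i = j) ∧
    (∀ i < β, ∀ j < β, b i = b j → i = j) ∧
    (∀ i < α, ∀ j < β, a i ≠ b j) ∧
    (∀ i < α, a i ∉ c.support) ∧ (∀ j < β, b j ∉ c.support) ∧
    r w = u ∧ r u = a 0 ∧ r v = b 0 ∧
    (∀ i, i + 1 < α → r (a i) = a (i + 1)) ∧
    (∀ j, j + 1 < β → r (b j) = b (j + 1)) ∧
    ((r (a (α - 1)) = w ∧ r (b (β - 1)) = v) ∨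
     (r (a (α - 1)) = v ∧ r (b (β - 1)) = w))

/-- `r` is pre-bolstering with respect to `c` if it is `k`-pre-bolstering for some `k`. -/
def IsPreBolstering {n : ℕ} (c r : Equiv.Perm (Fin n)) : Prop :=
  ∃ k, IsKPreBolstering k c r

/-!
Both sides say how `S = supp c` meets its translates under `r`. Commuting cycles are either disjoint
or powers of each other, and `c^r ∈ ⟨c⟩` would force `c^(r²) ∈ ⟨c⟩`; so the three conditions
amount to: `r` maps some point of `S` into `S`, while `r²` maps no point of `S` into `S`.
Such an `r` has exactly one arrow `w ↦ u` inside `S`, and the points `a_i`, `b_j` are the excursions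
outside `S` that start at `u` and at the third point `v` and end at the first return to `S`.
By injectivity the two excursions are disjoint and neither ends at `u = r w`, so they end at
`v` and `w` in one of the two orders.
-/

section Group

variable {G : Type*} [Group G] {a b g : G}

theorem inv_mul_inv_mul_mul_eq_one_iff_commute : a⁻¹ * b⁻¹ * a * b = 1 ↔ Commute a b := by
  simpa only [commutatorElement_def, inv_inv, Commute.inv_inv_iff] using
    commutatorElement_eq_one_iff_commute (g₁ := a⁻¹) (g₂ := b⁻¹)

theorem mem_zpowers_iff_of_orderOf_eq_three (ha : orderOf a = 3) :
    b ∈ Subgroup.zpowers a ↔ b = 1 ∨ b = a ∨ b = a ^ 2 := by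
  classical
  have hfin : IsOfFinOrder a := orderOf_pos_iff.1 (by omega)
  rw [hfin.mem_zpowers_iff_mem_range_orderOf, ha]
  simp only [Finset.range_add_one, Finset.range_zero, Finset.image_insert, Finset.image_empty,
    Finset.mem_insert, Finset.notMem_empty, pow_zero, pow_one]
  tauto

theorem conj_sq_mem_zpowers (h : g⁻¹ * a * g ∈ Subgroup.zpowers a) :
    (g ^ 2)⁻¹ * a * g ^ 2 ∈ Subgroup.zpowers a := by
  obtain ⟨k, hk⟩ := Subgroup.mem_zpowers_iff.1 h
  refine Subgroup.mem_zpowers_iff.2 ⟨k * k, ?_⟩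
  calc a ^ (k * k) = (g⁻¹ * a * g⁻¹⁻¹) ^ k := by rw [zpow_mul, hk, inv_inv]
    _ = g⁻¹ * (g⁻¹ * a * g) * g := by rw [conj_zpow, hk, inv_inv]
    _ = (g ^ 2)⁻¹ * a * g ^ 2 := by simp only [sq, mul_inv_rev, mul_assoc]

end Group

section Cycles

open Equiv.Perm

variable {α : Type*}

theorem disjoint_conj_iff {c r : Equiv.Perm α} :
    c.Disjoint (r⁻¹ * c * r) ↔ ∀ x, c x ≠ x → c (r x) = r x := by
  have fixed_iff (x : α) : (r⁻¹ * c * r) x = x ↔ c (r x) = r x := by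
    rw [mul_apply, mul_apply, inv_eq_iff_eq]
  simp only [Equiv.Perm.Disjoint, fixed_iff, or_iff_not_imp_left, ne_eq]

theorem eq_one_of_disjoint_of_mem_zpowers {c d : Equiv.Perm α} (hcd : c.Disjoint d)
    (hd : d ∈ Subgroup.zpowers c) : d = 1 := by
  obtain ⟨k, rfl⟩ := hd
  simpa using hcd.zpow_disjoint_zpow k 1

theorem support_subset_of_commute_of_not_disjoint [Fintype α] [DecidableEq α]
    {c d : Equiv.Perm α} (hd : d.IsCycle) (h : Commute c d) (hcd : ¬c.Disjoint d) :
    d.support ⊆ c.support := by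
  obtain ⟨x, hcx, hdx⟩ : ∃ x, c x ≠ x ∧ d x ≠ x := by
    simpa only [Equiv.Perm.Disjoint, not_forall, not_or] using hcd
  intro y hy
  obtain ⟨i, rfl⟩ := hd.exists_zpow_eq hdx (mem_support.1 hy)
  exact (mem_support_iff_of_commute (h.zpow_right i).symm x).2 (mem_support.2 hcx)

theorem commute_iff_disjoint_or_mem_zpowers [Finite α] {c d : Equiv.Perm α} (hc : c.IsCycle)
    (hd : d.IsCycle) : Commute c d ↔ c.Disjoint d ∨ d ∈ Subgroup.zpowers c := by
  classical
  cases nonempty_fintype α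
  constructor
  · intro h
    refine or_iff_not_imp_left.2 fun hcd => ?_
    have hsub := support_subset_of_commute_of_not_disjoint hd h hcd
    obtain ⟨hinv, hmem⟩ := hc.commute_iff.1 h.symm
    rwa [ofSubtype_subtypePerm hinv fun x hx => hsub (mem_support.2 hx)] at hmem
  · rintro (hcd | ⟨k, rfl⟩)
    · exact hcd.commute
    · exact Commute.self_zpow c k

variable [Fintype α] [DecidableEq α] {c d r : Equiv.Perm α}

theorem isThreeCycle_conj (hc : c.IsThreeCycle) : (r⁻¹ * c * r).IsThreeCycle := by
  have h : (r⁻¹ * c * r⁻¹⁻¹).cycleType = c.cycleType := cycleType_conj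
  rw [inv_inv] at h
  exact h.trans hc

theorem ne_and_ne_sq_and_commute_iff_disjoint (hc : c.IsThreeCycle) (hd : d.IsThreeCycle) :
    (d ≠ c ∧ d ≠ c ^ 2) ∧ Commute c d ↔ c.Disjoint d := by
  have hzpow : d ∈ Subgroup.zpowers c ↔ d = c ∨ d = c ^ 2 := by
    rw [mem_zpowers_iff_of_orderOf_eq_three hc.orderOf, or_iff_right hd.ne_one]
  have hexcl : c.Disjoint d → d ∉ Subgroup.zpowers c := fun hcd hmem =>
    hd.ne_one (eq_one_of_disjoint_of_mem_zpowers hcd hmem)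
  rw [commute_iff_disjoint_or_mem_zpowers hc.isCycle hd.isCycle, ← not_or, ← hzpow, and_comm,
    or_and_right, and_not_self_iff, or_false, and_iff_left_of_imp hexcl]

theorem not_commute_conj_and_disjoint_conj_sq_iff (hc : c.IsThreeCycle) :
    ¬Commute (r⁻¹ * c * r) c ∧ c.Disjoint ((r ^ 2)⁻¹ * c * r ^ 2) ↔
      (∃ x ∈ c.support, r x ∈ c.support) ∧ ∀ x ∈ c.support, r (r x) ∉ c.support := by
  have conj_notMem (h : c.Disjoint ((r ^ 2)⁻¹ * c * r ^ 2)) :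
      r⁻¹ * c * r ∉ Subgroup.zpowers c := fun hmem =>
    (isThreeCycle_conj hc).ne_one
      (eq_one_of_disjoint_of_mem_zpowers h (conj_sq_mem_zpowers hmem))
  calc
    _ ↔ ¬c.Disjoint (r⁻¹ * c * r) ∧ c.Disjoint ((r ^ 2)⁻¹ * c * r ^ 2) := by
      refine and_congr_left fun h => not_congr ?_
      rw [Commute.symm_iff,
        commute_iff_disjoint_or_mem_zpowers hc.isCycle (isThreeCycle_conj hc).isCycle,
        or_iff_left (conj_notMem h)]
    _ ↔ _ := by
      simp only [disjoint_conj_iff, mem_support, sq, mul_apply, not_forall, not_not, exists_prop,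
        ne_eq]

end Cycles

section FirstReturn

open Function

variable {α : Type*} {f : α → α}

/-- `m` is the first return time of `x` to `S` under iteration of `f`: the least positive `m` with
`f^[m] x ∈ S`. The points `f^[i] x` with `0 < i < m` form the excursion of `x` outside `S`. -/
structure IsFirstReturn (f : α → α) (S : Set α) (x : α) (m : ℕ) : Prop where
  pos : 0 < m
  mem : f^[m] x ∈ S
  notMem : ∀ i, 0 < i → i < m → f^[i] x ∉ S

variable {S : Set α} {x y : α} {m n i j : ℕ}

theorem exists_isFirstReturn (hx : x ∈ periodicPts f) (hxS : x ∈ S) :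
    ∃ m, IsFirstReturn f S x m := by
  classical
  have hex : ∃ m, 0 < m ∧ f^[m] x ∈ S := by
    obtain ⟨m, hm, hfm⟩ := hx
    exact ⟨m, hm, hfm.symm ▸ hxS⟩
  obtain ⟨hpos, hmem⟩ := Nat.find_spec hex
  exact ⟨Nat.find hex, hpos, hmem, fun i h0 hi h => Nat.find_min hex hi ⟨h0, h⟩⟩

namespace IsFirstReturn

theorem eq_and_eq_of_iterate_eq_of_le (hm : IsFirstReturn f S x m) (hf : Injective f)
    (hy : y ∈ S) (hj : 0 < j) (hji : j ≤ i) (him : i ≤ m) (h : f^[i] x = f^[j] y) :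
    i = j ∧ x = y := by
  have hxy : f^[i - j] x = y := by
    apply hf.iterate j
    rw [← iterate_add_apply, Nat.add_sub_cancel' hji, h]
  rcases Nat.eq_zero_or_pos (i - j) with h0 | h0
  · exact ⟨by omega, by simpa only [h0, iterate_zero_apply] using hxy⟩
  · exact absurd (hxy ▸ hy) (hm.notMem _ h0 (by omega))

theorem eq_and_eq_of_iterate_eq (hm : IsFirstReturn f S x m) (hn : IsFirstReturn f S y n)
    (hf : Injective f) (hx : x ∈ S) (hy : y ∈ S) (hi : 0 < i) (him : i ≤ m) (hj : 0 < j)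
    (hjn : j ≤ n) (h : f^[i] x = f^[j] y) : i = j ∧ x = y := by
  rcases le_total j i with hji | hij
  · exact hm.eq_and_eq_of_iterate_eq_of_le hf hy hj hji him h
  · exact (hn.eq_and_eq_of_iterate_eq_of_le hf hx hi hij hjn h.symm).imp Eq.symm Eq.symm

theorem three_le (hm : IsFirstReturn f S x m) (h1 : f x ∉ S) (h2 : f (f x) ∉ S) : 3 ≤ m := by
  have hpos := hm.pos
  have hm1 : m ≠ 1 := by rintro rfl; exact h1 hm.mem
  have hm2 : m ≠ 2 := by rintro rfl; exact h2 hm.mem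
  omega

theorem iterate_ne_apply (hm : IsFirstReturn f S x m) (hf : Injective f) (hm1 : m ≠ 1)
    (hy : y ∈ S) : f^[m] x ≠ f y := fun h =>
  hm1 (hm.eq_and_eq_of_iterate_eq_of_le hf hy one_pos hm.pos le_rfl h).1

theorem iterate_eq_or_iterate_eq_of_eq_insert {u v w : α} {p q : ℕ} (hp : IsFirstReturn f S u p)
    (hq : IsFirstReturn f S v q) (hf : Injective f) (hS : S = {u, v, w}) (huv : u ≠ v)
    (hwu : f w = u) (hp1 : p ≠ 1) (hq1 : q ≠ 1) :
    (f^[p] u = w ∧ f^[q] v = v) ∨ (f^[p] u = v ∧ f^[q] v = w) := by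
  obtain ⟨hu, hv, hw⟩ : u ∈ S ∧ v ∈ S ∧ w ∈ S := by simp [hS]
  have return_eq {x : α} {m : ℕ} (hm : IsFirstReturn f S x m) (hm1 : m ≠ 1) :
      f^[m] x = v ∨ f^[m] x = w := by
    have hmem : f^[m] x = u ∨ f^[m] x = v ∨ f^[m] x = w := by simpa [hS] using hm.mem
    exact hmem.resolve_left (hwu ▸ hm.iterate_ne_apply hf hm1 hw)
  have hne : f^[p] u ≠ f^[q] v := fun h =>
    huv (hp.eq_and_eq_of_iterate_eq hq hf hu hv hp.pos le_rfl hq.pos le_rfl h).2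
  rcases return_eq hp hp1 with hpv | hpw <;> rcases return_eq hq hq1 with hqv | hqw
  · exact absurd (hpv.trans hqv.symm) hne
  · exact Or.inr ⟨hpv, hqw⟩
  · exact Or.inl ⟨hpw, hqv⟩
  · exact absurd (hpw.trans hqw.symm) hne

end IsFirstReturn

end FirstReturn

theorem exists_labeling_of_card_eq_three {α : Type*} [DecidableEq α] {f : α → α} {S : Finset α}
    (hf : f.Injective) (hcard : S.card = 3) (hstep : ∃ x ∈ S, f x ∈ S)
    (hsq : ∀ x ∈ S, f (f x) ∉ S) :
    ∃ u v w, S = {u, v, w} ∧ u ≠ v ∧ f w = u ∧ f u ∉ S ∧ f v ∉ S := by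
  obtain ⟨w, hw, hfw⟩ := hstep
  have hne : w ≠ f w := fun h => hsq w hw (by rwa [← h, ← h])
  obtain ⟨v, hv⟩ : ∃ v, (S.erase (f w)).erase w = {v} := by
    rw [← Finset.card_eq_one, Finset.card_erase_of_mem (Finset.mem_erase.2 ⟨hne, hw⟩),
      Finset.card_erase_of_mem hfw, hcard]
  obtain ⟨hvw, hvu, hvS⟩ : v ≠ w ∧ v ≠ f w ∧ v ∈ S := by
    have hmem : v ∈ (S.erase (f w)).erase w := hv ▸ Finset.mem_singleton_self v
    simpa only [Finset.mem_erase] using hmem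
  have hS : S = {f w, v, w} := by
    rw [Finset.pair_comm, ← hv, Finset.insert_erase (Finset.mem_erase.2 ⟨hne, hw⟩),
      Finset.insert_erase hfw]
  refine ⟨f w, v, w, hS, hvu.symm, rfl, hsq w hw, fun hfv => ?_⟩
  have hcases : f v = f w ∨ f v = v ∨ f v = w := by
    simpa only [hS, Finset.mem_insert, Finset.mem_singleton] using hfv
  rcases hcases with h | h | h
  · exact hvw (hf h)
  · exact hsq v hvS (by rwa [h, h])
  · exact hsq v hvS (by rwa [h])

section PreBolstering

variable {n : ℕ} {c r : Equiv.Perm (Fin n)}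

theorem IsPreBolstering.exists_mem_and_forall_notMem (h : IsPreBolstering c r) :
    (∃ x ∈ c.support, r x ∈ c.support) ∧ ∀ x ∈ c.support, r (r x) ∉ c.support := by
  obtain ⟨_, u, v, w, α, β, a, b, hS, hα, hβ, -, -, -, -, ha, hb, hrw, hru, hrv, hra, hrb, -⟩ := h
  have hu : u ∈ c.support := by simp [hS]
  have hw : w ∈ c.support := by simp [hS]
  refine ⟨⟨w, hw, hrw ▸ hu⟩, fun x hx => ?_⟩
  have hcases : x = u ∨ x = v ∨ x = w := by
    simpa only [hS, Finset.mem_insert, Finset.mem_singleton] using hx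
  rcases hcases with rfl | rfl | rfl
  · rw [hru, hra 0 (by omega)]
    exact ha 1 (by omega)
  · rw [hrv, hrb 0 (by omega)]
    exact hb 1 (by omega)
  · rw [hrw, hru]
    exact ha 0 (by omega)

theorem isPreBolstering_of_isFirstReturn {u v w : Fin n} {p q : ℕ} (hS : c.support = {u, v, w})
    (huv : u ≠ v) (hrw : r w = u) (hp : IsFirstReturn r c.support u p)
    (hq : IsFirstReturn r c.support v q) (hp3 : 3 ≤ p) (hq3 : 3 ≤ q) : IsPreBolstering c r := by
  obtain ⟨hu, hv⟩ : u ∈ c.support ∧ v ∈ c.support := by simp [hS]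
  have cross {i j : ℕ} (hi : 0 < i) (hip : i ≤ p) (hj : 0 < j) (hjq : j ≤ q) :
      r^[i] u ≠ r^[j] v := fun h =>
    huv (hp.eq_and_eq_of_iterate_eq hq r.injective hu hv hi hip hj hjq h).2
  have inj {x : Fin n} {m i j : ℕ} (hx : x ∈ c.support) (hm : IsFirstReturn r c.support x m)
      (hi : i + 1 ≤ m) (hj : j + 1 ≤ m) (h : r^[i + 1] x = r^[j + 1] x) : i = j :=
    Nat.succ_injective
      (hm.eq_and_eq_of_iterate_eq hm r.injective hx hx i.succ_pos hi j.succ_pos hj h).1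
  have hends := hp.iterate_eq_or_iterate_eq_of_eq_insert hq r.injective (by simp [hS]) huv hrw
    (by omega) (by omega)
  have step (x : Fin n) (i : ℕ) : r (r^[i + 1] x) = r^[i + 1 + 1] x :=
    (Function.iterate_succ_apply' r (i + 1) x).symm
  obtain ⟨α, rfl⟩ := Nat.exists_eq_add_of_le' hp3
  obtain ⟨β, rfl⟩ := Nat.exists_eq_add_of_le' hq3
  refine ⟨_, u, v, w, α + 2, β + 2, fun i => r^[i + 1] u, fun j => r^[j + 1] v, hS, by omega,
    by omega, rfl, fun i hi j hj => inj hu hp (by omega) (by omega),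
    fun i hi j hj => inj hv hq (by omega) (by omega),
    fun i hi j hj => cross i.succ_pos (by omega) j.succ_pos (by omega),
    fun i hi => hp.notMem _ i.succ_pos (by omega), fun j hj => hq.notMem _ j.succ_pos (by omega),
    hrw, rfl, rfl, fun i _ => step u i, fun j _ => step v j, ?_⟩
  simpa only [Nat.add_succ_sub_one, step] using hends

theorem isPreBolstering_iff_exists_mem_and_forall_notMem (hc : c.IsThreeCycle) :
    IsPreBolstering c r ↔
      (∃ x ∈ c.support, r x ∈ c.support) ∧ ∀ x ∈ c.support, r (r x) ∉ c.support := by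
  refine ⟨IsPreBolstering.exists_mem_and_forall_notMem, fun ⟨hstep, hsq⟩ => ?_⟩
  obtain ⟨u, v, w, hS, huv, hrw, hru, hrv⟩ :=
    exists_labeling_of_card_eq_three r.injective hc.card_support hstep hsq
  have hu : u ∈ c.support := by simp [hS]
  have hv : v ∈ c.support := by simp [hS]
  obtain ⟨p, hp⟩ := exists_isFirstReturn (r.injective.mem_periodicPts u) hu
  obtain ⟨q, hq⟩ := exists_isFirstReturn (r.injective.mem_periodicPts v) hv
  exact isPreBolstering_of_isFirstReturn hS huv hrw hp hq (hp.three_le hru (hsq u hu))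
    (hq.three_le hrv (hsq v hv))

end PreBolstering

/-- Let `c ∈ Sym_n` be a `3`-cycle.  Then `r` is pre-bolstering with
respect to `c` if and only if `[c^r, c] ≠ 1`, `c^{r²} ∉ {c, c²}` and `[c, c^{r²}] = 1`,
where `a^b = b⁻¹ab` and `[a,b] = a⁻¹b⁻¹ab`. -/
theorem isPreBolstering_iff (n : ℕ) (c r : Equiv.Perm (Fin n)) (hc : c.IsThreeCycle) :
    IsPreBolstering c r ↔
      ((r⁻¹ * c * r)⁻¹ * c⁻¹ * (r⁻¹ * c * r) * c ≠ 1 ∧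
       ((r ^ 2)⁻¹ * c * r ^ 2 ≠ c ∧ (r ^ 2)⁻¹ * c * r ^ 2 ≠ c ^ 2) ∧
       c⁻¹ * ((r ^ 2)⁻¹ * c * r ^ 2)⁻¹ * c * ((r ^ 2)⁻¹ * c * r ^ 2) = 1) := by
  simp only [ne_eq, inv_mul_inv_mul_mul_eq_one_iff_commute]
  rw [isPreBolstering_iff_exists_mem_and_forall_notMem hc,
    ← not_commute_conj_and_disjoint_conj_sq_iff hc,
    ← ne_and_ne_sq_and_commute_iff_disjoint hc (isThreeCycle_conj hc)]
end

section
/- Let n and k be natural numbers with 7 ≤ k ≤ n, let G be either Alt_n or Sym_n, and let c ∈ G be a 3-cycle. Let L_{c,G}(k) denote the number of elements of G that are k-pre-bolstering with respect to c. Then L_{c,Sym_n}(k) = 12·(n−3)!·(k−6) and L_{c,Alt_n}(k) = 6·(n−3)!·(k−6). Moreover, (1/|G|)·Σ_{k=7}^{n} L_{c,G}(k) ≥ 2/(5n). -/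
open scoped Classical

/-!
Left multiplication by `swap w v` merges the two cycles of `(w, u, a₁, …, a_α)(v, b₁, …, b_β)(⋯)`
into the cycle `(w, u, a₁, …, a_α, v, b₁, …, b_β)` and conversely. It therefore suffices to count
the permutations of the second form, and since the transposition changes the sign, exactly half of
the permutations having one of the two forms are even.

Fix `(w, u, v)` and the position `p = α + 2` of `v` in a cycle of length `k`. The permutations `r`
with such a cycle correspond to pairs `(f, r)`, where `f` embeds `Fin k` in `X` with prescribed
values at `0`, `1`, `p` and `r` restricts to the rotation on the image of `f`. For each `f` there
are as many such `r` as there are permutations carrying a fixed embedding `f₀` to `f`; hence in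
total as many as there are permutations with prescribed values at three points, namely `(n - 3)!`.

The labels and `p` can be read off from `r`: `w` is the only point of the support of `c` that `r`
maps into the support, `u` is its image, and `p` is the first time after `1` at which the orbit of
`w` meets the support. Summing over the six labelings and `k - 6` positions gives
`12 (n - 3)! (k - 6)`.
-/

section Counting

open Equiv (Perm)
open Finset Function

variable {ι κ X : Type*} [Fintype ι] [Fintype κ] [Fintype X] [DecidableEq X]

lemma card_filter_perm_forall_apply_eq (f g : ι ↪ X) :
    #{σ : Perm X | ∀ i, σ (f i) = g i} = (Fintype.card X - Fintype.card ι).factorial := by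
  let e : Set.range f ≃ Set.range g :=
    (Equiv.ofInjective f f.injective).symm.trans (Equiv.ofInjective g g.injective)
  have he (i : ι) : (e ⟨f i, i, rfl⟩ : X) = g i := by
    simp [e]
  have hcompl (h : ι ↪ X) :
      Fintype.card ↥(Set.range h)ᶜ = Fintype.card X - Fintype.card ι := by
    rw [Fintype.card_compl_set, Set.card_range_of_injective h.injective]
  have extends_iff (σ : Perm X) :
      (∀ i, σ (f i) = g i) ↔ ∀ x : Set.range f, σ x = e x := by
    simp only [Set.forall_subtype_range_iff, he]
  rw [← Fintype.card_subtype,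
    Fintype.card_congr ((Equiv.subtypeEquivRight extends_iff).trans (Equiv.Set.compl e)),
    Fintype.card_equiv (Fintype.equivOfCardEq ((hcompl f).trans (hcompl g).symm)), hcompl]

lemma sum_card_filter_perm_semiconj (hιX : Fintype.card ι ≤ Fintype.card X) (ρ : Perm ι)
    (s : κ ↪ ι) (t : κ ↪ X) :
    ∑ f : ι ↪ X with ∀ j, f (s j) = t j, #{r : Perm X | ∀ i, r (f i) = f (ρ i)} =
      (Fintype.card X - Fintype.card κ).factorial := by
  obtain ⟨f₀⟩ := Function.Embedding.nonempty_of_card_le hιX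
  calc ∑ f : ι ↪ X with ∀ j, f (s j) = t j, #{r : Perm X | ∀ i, r (f i) = f (ρ i)}
      = ∑ f : ι ↪ X with ∀ j, f (s j) = t j,
          #{σ : Perm X | (∀ j, σ (f₀ (s j)) = t j) ∧ f₀.trans σ.toEmbedding = f} := by
        refine sum_congr rfl fun f hf => ?_
        rw [mem_filter_univ] at hf
        refine (card_filter_perm_forall_apply_eq f (ρ.toEmbedding.trans f)).trans ?_
        rw [← card_filter_perm_forall_apply_eq f₀ f]
        congr 1 with σ
        simp only [DFunLike.ext_iff, mem_filter_univ]
        exact ⟨fun h => ⟨fun j => (h _).trans (hf j), h⟩, And.right⟩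
    _ = #{σ : Perm X | ∀ j, σ (f₀ (s j)) = t j} := by
        simp only [← filter_filter]
        refine (card_eq_sum_card_fiberwise fun σ hσ => ?_).symm
        simpa using hσ
    _ = (Fintype.card X - Fintype.card κ).factorial :=
        card_filter_perm_forall_apply_eq (s.trans f₀) t

end Counting

section Cycles

open Equiv (Perm)
open Finset Function

variable {X : Type*}

lemma minimalPeriod_eq_of_forall_iterate_ne {f : X → X} {x : X} {k : ℕ} (hk : 0 < k)
    (hfk : f^[k] x = x) (hne : ∀ m, 0 < m → m < k → f^[m] x ≠ x) : minimalPeriod f x = k := by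
  have hper : IsPeriodicPt f k x := hfk
  by_contra hlt
  exact hne _ (hper.minimalPeriod_pos hk) ((hper.minimalPeriod_le hk).lt_of_ne hlt)
    iterate_minimalPeriod

lemma iterate_apply_zero_of_chain {f : X → X} {a : ℕ → X} {m i : ℕ}
    (ha : ∀ i, i + 1 < m → f (a i) = a (i + 1)) (hi : i < m) : f^[i] (a 0) = a i := by
  induction i with
  | zero => rfl
  | succ i ih => rw [iterate_succ_apply', ih (by omega), ha i hi]

lemma iterate_apply_zero_of_apply_eq_apply_add_one {k : ℕ} [NeZero k] {f : X → X} {a : Fin k → X}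
    (ha : ∀ i, f (a i) = a (i + 1)) (m : ℕ) : f^[m] (a 0) = a (Fin.ofNat k m) := by
  induction m with
  | zero => rfl
  | succ m ih =>
    rw [iterate_succ_apply', ih, ha]
    congr 1
    ext
    simp [Fin.val_add]

lemma minimalPeriod_apply_zero {k : ℕ} [NeZero k] {f : X → X} {a : Fin k → X}
    (ha_inj : Injective a) (ha : ∀ i, f (a i) = a (i + 1)) : minimalPeriod f (a 0) = k := by
  refine minimalPeriod_eq_of_forall_iterate_ne (NeZero.pos k) ?_ fun m hm hmk h => hm.ne' ?_
  · rw [iterate_apply_zero_of_apply_eq_apply_add_one ha]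
    congr 1
    ext
    simp
  · rw [iterate_apply_zero_of_apply_eq_apply_add_one ha] at h
    simpa [Nat.mod_eq_of_lt hmk] using congrArg Fin.val (ha_inj h)

lemma apply_iterate_val_eq {k : ℕ} [NeZero k] {f : X → X} {x : X} (hx : minimalPeriod f x = k)
    (i : Fin k) : f (f^[i] x) = f^[(i + 1 : Fin k)] x := by
  rw [← iterate_succ_apply' f, ← iterate_mod_minimalPeriod_eq, hx]
  simp [Fin.val_add]

lemma card_filter_minimalPeriod_eq_and_iterate_eq {κ : Type*} [Fintype κ] [Fintype X]
    [DecidableEq X] {k : ℕ} [NeZero k] (hkX : k ≤ Fintype.card X) (s : κ ↪ Fin k) (t : κ ↪ X)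
    {o : κ} (ho : s o = 0) :
    #{r : Perm X | minimalPeriod r (t o) = k ∧ ∀ j, r^[s j] (t o) = t j} =
      (Fintype.card X - Fintype.card κ).factorial := by
  rw [← sum_card_filter_perm_semiconj (by simpa using hkX) (Equiv.addRight (1 : Fin k)) s t,
    ← card_sigma]
  symm
  refine card_bij (fun x _ => x.2) ?_ ?_ ?_
  · rintro ⟨f, r⟩ h
    simp only [mem_sigma, mem_filter_univ] at h ⊢
    obtain ⟨hft, hr⟩ := h
    rw [← hft, ho]
    refine ⟨minimalPeriod_apply_zero f.injective hr, fun j => ?_⟩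
    rw [iterate_apply_zero_of_apply_eq_apply_add_one hr, Fin.ofNat_val_eq_self, hft]
  · rintro ⟨f, r⟩ h ⟨f', r'⟩ h' (rfl : r = r')
    simp only [mem_sigma, mem_filter_univ] at h h'
    have hf : f = f' := by
      ext i
      rw [← Fin.ofNat_val_eq_self i, ← iterate_apply_zero_of_apply_eq_apply_add_one h.2,
        ← iterate_apply_zero_of_apply_eq_apply_add_one h'.2, ← ho, h.1, h'.1]
    rw [hf]
  · intro r hr
    obtain ⟨hper, hr⟩ := mem_filter_univ _ |>.1 hr
    have hinj : Injective fun i : Fin k => r^[i] (t o) := fun i j hij =>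
      Fin.ext ((iterate_eq_iterate_iff_of_lt_minimalPeriod (by simp [hper]) (by simp [hper])).1 hij)
    refine ⟨⟨⟨_, hinj⟩, r⟩, ?_, rfl⟩
    simp only [mem_sigma, mem_filter_univ]
    exact ⟨hr, apply_iterate_val_eq hper⟩

/-- `r` has a cycle `(w, u, …, v, …)` of length `k`, in which `v` stands `p` steps after `w`. -/
structure IsMarkedCycle (k p : ℕ) (w u v : X) (r : Perm X) : Prop where
  minimalPeriod_eq : minimalPeriod r w = k
  apply_eq : r w = u
  iterate_eq : r^[p] w = v

lemma card_filter_isMarkedCycle [Fintype X] [DecidableEq X] {k p : ℕ} (hp : 1 < p) (hpk : p < k)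
    (hkX : k ≤ Fintype.card X) (t : Fin 3 ↪ X) :
    #{r : Perm X | IsMarkedCycle k p (t 0) (t 1) (t 2) r} = (Fintype.card X - 3).factorial := by
  have : NeZero k := ⟨by omega⟩
  have hs : Injective ![(0 : Fin k), ⟨1, by omega⟩, ⟨p, hpk⟩] := by
    intro i j h
    fin_cases i <;> fin_cases j <;> simp [Fin.ext_iff] at h ⊢ <;> omega
  have hcard := card_filter_minimalPeriod_eq_and_iterate_eq hkX ⟨_, hs⟩ t (o := 0) rfl
  rw [Fintype.card_fin] at hcard
  rw [← hcard]
  congr 1 with r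
  have : IsMarkedCycle k p (t 0) (t 1) (t 2) r ↔
      minimalPeriod r (t 0) = k ∧ r (t 0) = t 1 ∧ r^[p] (t 0) = t 2 :=
    ⟨fun ⟨hper, hu, hv⟩ => ⟨hper, hu, hv⟩, fun ⟨hper, hu, hv⟩ => ⟨hper, hu, hv⟩⟩
  simp [this, Fin.forall_fin_succ]

lemma isMarkedCycle_of_chains {w u v : X} {α β : ℕ} {a b : ℕ → X} {r : Perm X}
    (hα : 0 < α) (hβ : 0 < β) (huw : u ≠ w) (hvw : v ≠ w)
    (haw : ∀ i < α, a i ≠ w) (hbw : ∀ j < β, b j ≠ w)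
    (hw : r w = u) (hu : r u = a 0) (ha : ∀ i, i + 1 < α → r (a i) = a (i + 1))
    (ha_last : r (a (α - 1)) = v) (hv : r v = b 0)
    (hb : ∀ j, j + 1 < β → r (b j) = b (j + 1)) (hb_last : r (b (β - 1)) = w) :
    IsMarkedCycle (α + β + 3) (α + 2) w u v r := by
  have iterate_a (i : ℕ) (hi : i < α) : r^[i + 2] w = a i := by
    rw [iterate_add_apply, ← iterate_apply_zero_of_chain ha hi, ← hu, ← hw]
    rfl
  have iterate_v : r^[α + 2] w = v := by
    rw [show α + 2 = α - 1 + 2 + 1 by omega, iterate_succ_apply',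
      iterate_a _ (Nat.sub_one_lt_of_lt hα), ha_last]
  have iterate_b (j : ℕ) (hj : j < β) : r^[j + (α + 3)] w = b j := by
    rw [iterate_add_apply, ← iterate_apply_zero_of_chain hb hj, ← hv, ← iterate_v]
    exact congrArg _ (iterate_succ_apply' r _ w)
  refine ⟨minimalPeriod_eq_of_forall_iterate_ne (by omega) ?_ fun m hm hmk => ?_, hw, iterate_v⟩
  · rw [show α + β + 3 = β - 1 + (α + 3) + 1 by omega, iterate_succ_apply',
      iterate_b _ (Nat.sub_one_lt_of_lt hβ), hb_last]
  · obtain rfl | hm₁ := eq_or_ne m 1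
    · rwa [iterate_one, hw]
    obtain hmα | hmα := lt_or_ge m (α + 2)
    · obtain ⟨i, rfl⟩ := Nat.exists_eq_add_of_le' (show 2 ≤ m by omega)
      exact iterate_a i (by omega) ▸ haw i (by omega)
    obtain rfl | hmα := hmα.eq_or_lt
    · exact iterate_v ▸ hvw
    · obtain ⟨j, rfl⟩ := Nat.exists_eq_add_of_le' (show α + 3 ≤ m by omega)
      exact iterate_b j (by omega) ▸ hbw j (by omega)

lemma apply_iterate_eq_swap_apply [DecidableEq X] (x y z : X) (r : Perm X) (i : ℕ) :
    r ((Equiv.swap x y * r)^[i] z) = Equiv.swap x y ((Equiv.swap x y * r)^[i + 1] z) := by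
  rw [iterate_succ_apply', Equiv.Perm.mul_apply, Equiv.swap_apply_self]

namespace IsMarkedCycle

variable {k p i : ℕ} {w u v x : X} {r : Perm X}

lemma iterate_eq_iterate_iff (h : IsMarkedCycle k p w u v r) {j : ℕ} (hi : i < k) (hj : j < k) :
    r^[i] w = r^[j] w ↔ i = j :=
  iterate_eq_iterate_iff_of_lt_minimalPeriod (by rwa [h.minimalPeriod_eq])
    (by rwa [h.minimalPeriod_eq])

variable [DecidableEq X]

lemma iterate_mem_iff (h : IsMarkedCycle k p w u v r) (hk : 1 < k) (hpk : p < k) (hi : i < k) :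
    r^[i] w ∈ ({u, v, w} : Finset X) ↔ i = 0 ∨ i = 1 ∨ i = p := by
  rw [← h.iterate_eq_iterate_iff hi (by omega : 0 < k), ← h.iterate_eq_iterate_iff hi hk,
    ← h.iterate_eq_iterate_iff hi hpk, h.iterate_eq, iterate_one, h.apply_eq]
  simp only [mem_insert, mem_singleton, iterate_zero_apply]
  tauto

lemma apply_iterate_swap_mul (h : IsMarkedCycle k p w u v (Equiv.swap w x * r))
    (hx : x = w ∨ x = v) (hpk : p < k) (hip : i + 1 ≠ p) (hik : i + 1 < k) :
    r ((Equiv.swap w x * r)^[i] w) = (Equiv.swap w x * r)^[i + 1] w := by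
  have ne_w : (Equiv.swap w x * r)^[i + 1] w ≠ w := fun hw =>
    i.succ_ne_zero ((h.iterate_eq_iterate_iff hik (by omega : 0 < k)).1 hw)
  have ne_v : (Equiv.swap w x * r)^[i + 1] w ≠ v := fun hv =>
    hip ((h.iterate_eq_iterate_iff hik hpk).1 (hv.trans h.iterate_eq.symm))
  rw [apply_iterate_eq_swap_apply, Equiv.swap_apply_of_ne_of_ne ne_w]
  rcases hx with rfl | rfl <;> assumption

lemma apply_iterate_swap_mul_pred (h : IsMarkedCycle k p w u v (Equiv.swap w x * r)) (hp : 0 < p) :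
    r ((Equiv.swap w x * r)^[p - 1] w) = Equiv.swap w x v := by
  rw [apply_iterate_eq_swap_apply, Nat.sub_one_add_one hp.ne', h.iterate_eq]

lemma apply_iterate_swap_mul_last (h : IsMarkedCycle k p w u v (Equiv.swap w x * r))
    (hk : 0 < k) : r ((Equiv.swap w x * r)^[k - 1] w) = x := by
  rw [apply_iterate_eq_swap_apply, Nat.sub_one_add_one hk.ne', ← h.minimalPeriod_eq,
    iterate_minimalPeriod, Equiv.swap_apply_left]

lemma iterate_eq_iterate_swap_mul (h : IsMarkedCycle k p w u v (Equiv.swap w x * r))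
    (hx : x = w ∨ x = v) (hpk : p < k) (hi : i < p) :
    r^[i] w = (Equiv.swap w x * r)^[i] w := by
  induction i with
  | zero => rfl
  | succ i ih =>
    rw [iterate_succ_apply', ih (by omega), h.apply_iterate_swap_mul hx hpk hi.ne (by omega)]

lemma iterate_eq_swap_apply (h : IsMarkedCycle k p w u v (Equiv.swap w x * r))
    (hx : x = w ∨ x = v) (hp : 0 < p) (hpk : p < k) : r^[p] w = Equiv.swap w x v := by
  rw [← h.apply_iterate_swap_mul_pred hp, ← h.iterate_eq_iterate_swap_mul hx hpk (by omega),
    ← iterate_succ_apply' r, Nat.succ_eq_add_one, Nat.sub_one_add_one hp.ne']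

end IsMarkedCycle

/-- The disjoint cycle form of `r` is `(w, u, a₁, …, a_α)(v, b₁, …, b_β)(⋯)` or
`(w, u, a₁, …, a_α, v, b₁, …, b_β)(⋯)`, where `p = α + 2` and `k = α + β + 3`. Left multiplication
by `swap w v` exchanges the two forms, so both are expressed through the one-cycle form; the point
`x` is the image of `b_β` under `r`. -/
def HasPreBolsteringForm [DecidableEq X] (k p : ℕ) (w u v : X) (r : Perm X) : Prop :=
  ∃ x, (x = w ∨ x = v) ∧ IsMarkedCycle k p w u v (Equiv.swap w x * r)

namespace HasPreBolsteringForm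

variable [DecidableEq X] {k p : ℕ} {w u v : X} {r : Perm X}

lemma iff_or :
    HasPreBolsteringForm k p w u v r ↔
      IsMarkedCycle k p w u v r ∨ IsMarkedCycle k p w u v (Equiv.swap w v * r) := by
  simp [HasPreBolsteringForm, ← Equiv.Perm.one_def]

lemma apply_eq (h : HasPreBolsteringForm k p w u v r) (hp : 1 < p) (hpk : p < k) : r w = u := by
  obtain ⟨x, hx, h⟩ := h
  rw [← h.apply_eq]
  exact h.apply_iterate_swap_mul (i := 0) hx hpk (by omega) (by omega)

lemma apply_mem_iff (h : HasPreBolsteringForm k p w u v r) (hp : 2 < p) (hpk : p + 1 < k)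
    {y : X} (hy : y ∈ ({u, v, w} : Finset X)) : r y ∈ ({u, v, w} : Finset X) ↔ y = w := by
  have hw : r w = u := h.apply_eq (by omega) (by omega)
  obtain ⟨x, hx, h⟩ := h
  have apply_notMem {i : ℕ} (hi : 0 < i) (hip : i + 1 ≠ p) (hik : i + 1 < k) :
      r ((Equiv.swap w x * r)^[i] w) ∉ ({u, v, w} : Finset X) := by
    rw [h.apply_iterate_swap_mul hx (by omega) hip hik,
      h.iterate_mem_iff (by omega) (by omega) hik]
    omega
  have hu : r u ∉ ({u, v, w} : Finset X) := by
    simpa [-Equiv.Perm.coe_mul, h.apply_eq] using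
      apply_notMem one_pos (by omega) (by omega)
  have hv : r v ∉ ({u, v, w} : Finset X) := by
    rw [← h.iterate_eq]
    simpa only [h.iterate_eq] using apply_notMem (i := p) (by omega) (by omega) hpk
  refine ⟨fun hry => ?_, fun hyw => by simp [hyw, hw]⟩
  simp only [mem_insert, mem_singleton] at hy
  rcases hy with rfl | rfl | rfl
  · exact absurd hry hu
  · exact absurd hry hv
  · rfl

lemma iterate_mem (h : HasPreBolsteringForm k p w u v r) (hp : 0 < p) (hpk : p < k) :
    r^[p] w ∈ ({u, v, w} : Finset X) := by
  obtain ⟨x, rfl | rfl, h⟩ := h <;> simp [h.iterate_eq_swap_apply, hp, hpk]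

lemma iterate_notMem (h : HasPreBolsteringForm k p w u v r) (hpk : p < k) {i : ℕ} (hi : 1 < i)
    (hip : i < p) : r^[i] w ∉ ({u, v, w} : Finset X) := by
  obtain ⟨x, hx, h⟩ := h
  rw [h.iterate_eq_iterate_swap_mul hx hpk hip, h.iterate_mem_iff (by omega) hpk (by omega)]
  omega

lemma position_le {p' : ℕ} (h : HasPreBolsteringForm k p w u v r)
    (h' : HasPreBolsteringForm k p' w u v r) (hp : 1 < p) (hpk : p < k)
    (hpk' : p' < k) : p' ≤ p := by
  by_contra! hlt
  exact h'.iterate_notMem hpk' hp hlt (h.iterate_mem (by omega) hpk)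

end HasPreBolsteringForm

lemma hasPreBolsteringForm_of_chains [DecidableEq X] {w u v x : X} (hx : x = w ∨ x = v) {α β : ℕ}
    {a b : ℕ → X} {r : Perm X} (hα : 0 < α) (hβ : 0 < β) (huw : u ≠ w) (huv : u ≠ v) (hvw : v ≠ w)
    (haw : ∀ i < α, a i ≠ w) (hav : ∀ i < α, a i ≠ v)
    (hbw : ∀ j < β, b j ≠ w) (hbv : ∀ j < β, b j ≠ v)
    (hw : r w = u) (hu : r u = a 0) (ha : ∀ i, i + 1 < α → r (a i) = a (i + 1))
    (ha_last : r (a (α - 1)) = Equiv.swap w x v) (hv : r v = b 0)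
    (hb : ∀ j, j + 1 < β → r (b j) = b (j + 1)) (hb_last : r (b (β - 1)) = x) :
    HasPreBolsteringForm (α + β + 3) (α + 2) w u v r := by
  have swap_apply {y : X} (hyw : y ≠ w) (hyv : y ≠ v) : Equiv.swap w x y = y :=
    Equiv.swap_apply_of_ne_of_ne hyw (by rcases hx with rfl | rfl <;> assumption)
  refine ⟨x, hx, isMarkedCycle_of_chains (a := a) (b := b) hα hβ huw hvw haw hbw
    ?_ ?_ ?_ ?_ ?_ ?_ ?_⟩ <;> simp only [Equiv.Perm.mul_apply]
  · rw [hw, swap_apply huw huv]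
  · rw [hu, swap_apply (haw 0 hα) (hav 0 hα)]
  · exact fun i hi => by rw [ha i hi, swap_apply (haw _ hi) (hav _ hi)]
  · rw [ha_last, Equiv.swap_apply_self]
  · rw [hv, swap_apply (hbw 0 hβ) (hbv 0 hβ)]
  · exact fun j hj => by rw [hb j hj, swap_apply (hbw _ hj) (hbv _ hj)]
  · rw [hb_last, Equiv.swap_apply_right]

section Labelings

variable [DecidableEq X] {S : Finset X}

lemma labels_eq (e : Fin 3 ≃ S) : ({↑(e 1), ↑(e 2), ↑(e 0)} : Finset X) = S := by
  ext y
  have := e.surjective.exists (p := fun x : S => (x : X) = y)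
  simp only [Subtype.exists, exists_prop, exists_eq_right, Fin.exists_fin_succ] at this
  simp [this, eq_comm]
  tauto

lemma exists_labels_eq (hS : #S = 3) {u v w : X} (hS_eq : S = {u, v, w}) :
    ∃ e : Fin 3 ≃ S, (e 0 : X) = w ∧ (e 1 : X) = u ∧ (e 2 : X) = v := by
  let labels : Fin 3 → S :=
    ![⟨w, by simp [hS_eq]⟩, ⟨u, by simp [hS_eq]⟩, ⟨v, by simp [hS_eq]⟩]
  have hsurj : Surjective labels := by
    rintro ⟨y, hy⟩
    simp only [hS_eq, mem_insert, mem_singleton] at hy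
    rcases hy with rfl | rfl | rfl
    exacts [⟨1, rfl⟩, ⟨2, rfl⟩, ⟨0, rfl⟩]
  have hbij := (Fintype.bijective_iff_surjective_and_card labels).2 ⟨hsurj, by simp [hS]⟩
  exact ⟨Equiv.ofBijective labels hbij, rfl, rfl, rfl⟩

lemma HasPreBolsteringForm.labels_unique {e e' : Fin 3 ≃ S} {k p p' : ℕ} {r : Perm X}
    (h : HasPreBolsteringForm k p ↑(e 0) ↑(e 1) ↑(e 2) r)
    (h' : HasPreBolsteringForm k p' ↑(e' 0) ↑(e' 1) ↑(e' 2) r) (hp : 2 < p) (hpk : p + 1 < k)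
    (hp' : 2 < p') (hpk' : p' + 1 < k) : e = e' ∧ p = p' := by
  have h₀ : e 0 = e' 0 := by
    refine Subtype.ext ((h'.apply_mem_iff hp' hpk' ?_).1 ?_)
    · simp only [labels_eq, coe_mem]
    · simp only [h.apply_eq (by omega) (by omega), labels_eq, coe_mem]
  have h₁ : e 1 = e' 1 := by
    rw [← Subtype.val_inj, ← h.apply_eq (by omega) (by omega), h₀,
      h'.apply_eq (by omega) (by omega)]
  have eq_one_of_fixes : ∀ σ : Perm (Fin 3), σ 0 = 0 → σ 1 = 1 → σ = 1 := by decide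
  obtain rfl : e = e' := Equiv.ext fun j => by
    have := eq_one_of_fixes (e.trans e'.symm) (by simp [h₀]) (by simp [h₁])
    simpa [Equiv.symm_apply_eq] using DFunLike.congr_fun this j
  exact ⟨rfl, (h'.position_le h (by omega) (by omega) (by omega)).antisymm
    (h.position_le h' (by omega) (by omega) (by omega))⟩

end Labelings

section Cardinalities

variable [Fintype X] [DecidableEq X] {k p : ℕ}

lemma card_filter_and_hasPreBolsteringForm {w u v : X} (hvw : v ≠ w) (hp : 0 < p) (hpk : p < k)
    (Q : Perm X → Prop) :
    #{r | Q r ∧ HasPreBolsteringForm k p w u v r} =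
      #{r | Q r ∧ IsMarkedCycle k p w u v r} +
        #{r | Q (Equiv.swap w v * r) ∧ IsMarkedCycle k p w u v r} := by
  have hdisj : Disjoint (filter (fun r => Q r ∧ IsMarkedCycle k p w u v r) univ)
      (filter (fun r => Q r ∧ IsMarkedCycle k p w u v (Equiv.swap w v * r)) univ) := by
    refine disjoint_filter.2 fun r _ ⟨_, h⟩ ⟨_, h'⟩ => hvw ?_
    rw [← h.iterate_eq, h'.iterate_eq_swap_apply (.inr rfl) hp hpk, Equiv.swap_apply_right]
  have hswap : #{r | Q r ∧ IsMarkedCycle k p w u v (Equiv.swap w v * r)} =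
      #{r | Q (Equiv.swap w v * r) ∧ IsMarkedCycle k p w u v r} :=
    card_equiv (Equiv.mulLeft (Equiv.swap w v)) (by simp [-Equiv.Perm.coe_mul])
  simp only [HasPreBolsteringForm.iff_or, and_or_left, filter_or]
  rw [card_union_of_disjoint hdisj, hswap]

lemma card_filter_hasPreBolsteringForm (hp : 1 < p) (hpk : p < k) (hkX : k ≤ Fintype.card X)
    (t : Fin 3 ↪ X) :
    #{r | HasPreBolsteringForm k p (t 0) (t 1) (t 2) r} =
      2 * (Fintype.card X - 3).factorial := by
  have h20 : t 2 ≠ t 0 := t.injective.ne (by decide)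
  have := card_filter_and_hasPreBolsteringForm (u := t 1) h20 (by omega) hpk fun _ => True
  simpa only [true_and, card_filter_isMarkedCycle hp hpk hkX, ← two_mul] using this

lemma card_filter_mem_alternatingGroup_and_hasPreBolsteringForm (hp : 1 < p) (hpk : p < k)
    (hkX : k ≤ Fintype.card X) (t : Fin 3 ↪ X) :
    #{r | r ∈ alternatingGroup X ∧ HasPreBolsteringForm k p (t 0) (t 1) (t 2) r} =
      (Fintype.card X - 3).factorial := by
  have h20 : t 2 ≠ t 0 := t.injective.ne (by decide)
  have swap_mul_mem_iff (r : Perm X) :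
      Equiv.swap (t 0) (t 2) * r ∈ alternatingGroup X ↔ r ∉ alternatingGroup X := by
    rw [Equiv.Perm.mem_alternatingGroup, Equiv.Perm.mem_alternatingGroup, Equiv.Perm.sign_mul,
      Equiv.Perm.sign_swap h20.symm, neg_one_mul, neg_eq_iff_eq_neg]
    exact Int.units_ne_iff_eq_neg.symm
  have hsplit := card_filter_add_card_filter_not (fun r => r ∈ alternatingGroup X)
    (s := filter (fun r => IsMarkedCycle k p (t 0) (t 1) (t 2) r) univ)
  simp only [filter_filter, and_comm (a := IsMarkedCycle k p _ _ _ _),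
    card_filter_isMarkedCycle hp hpk hkX] at hsplit
  rw [card_filter_and_hasPreBolsteringForm h20 (by omega) hpk, ← hsplit]
  simp only [swap_mul_mem_iff]

end Cardinalities

section PreBolstering

variable {n k : ℕ} {c r : Perm (Fin n)}

lemma IsKPreBolstering.exists_hasPreBolsteringForm (hc : #c.support = 3)
    (h : IsKPreBolstering k c r) :
    ∃ e : Fin 3 ≃ c.support, ∃ p ∈ Icc 4 (k - 3),
      HasPreBolsteringForm k p ↑(e 0) ↑(e 1) ↑(e 2) r := by
  obtain ⟨u, v, w, α, β, a, b, hsupp, hα, hβ, rfl, -, -, -, ha_mem, hb_mem, hw, hu, hv, ha, hb,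
    hlast⟩ := h
  obtain ⟨e, rfl, rfl, rfl⟩ := exists_labels_eq hc hsupp
  have label_ne {i j : Fin 3} (hij : i ≠ j) : (e i : Fin n) ≠ e j :=
    Subtype.val_injective.ne (e.injective.ne hij)
  have a_ne (j : Fin 3) (i : ℕ) (hi : i < α) : a i ≠ e j := fun h => ha_mem i hi (h ▸ (e j).2)
  have b_ne (j : Fin 3) (i : ℕ) (hi : i < β) : b i ≠ e j := fun h => hb_mem i hi (h ▸ (e j).2)
  have form_of_last (x : Fin n) (hx : x = e 0 ∨ x = e 2)
      (ha_last : r (a (α - 1)) = Equiv.swap ↑(e 0) x (e 2)) (hb_last : r (b (β - 1)) = x) :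
      HasPreBolsteringForm (α + β + 3) (α + 2) ↑(e 0) ↑(e 1) ↑(e 2) r :=
    hasPreBolsteringForm_of_chains hx (by omega) (by omega) (label_ne (by decide))
      (label_ne (by decide)) (label_ne (by decide)) (a_ne 0) (a_ne 2) (b_ne 0) (b_ne 2)
      hw hu ha ha_last hv hb hb_last
  refine ⟨e, α + 2, by simp only [mem_Icc]; omega, ?_⟩
  rcases hlast with ⟨ha_last, hb_last⟩ | ⟨ha_last, hb_last⟩
  · exact form_of_last (e 2) (.inr rfl) (by rwa [Equiv.swap_apply_right]) hb_last
  · exact form_of_last (e 0) (.inl rfl) (by rwa [Equiv.swap_self, Equiv.refl_apply]) hb_last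

lemma HasPreBolsteringForm.isKPreBolstering {p : ℕ} {u v w : Fin n} (hp : 4 ≤ p)
    (hpk : p + 3 ≤ k) (hsupp : c.support = {u, v, w}) (h : HasPreBolsteringForm k p w u v r) :
    IsKPreBolstering k c r := by
  have hw : r w = u := h.apply_eq (by omega) (by omega)
  obtain ⟨x, hx, h⟩ := h
  set ρ := Equiv.swap w x * r
  have r_iterate (i : ℕ) (hip : i + 1 ≠ p) (hik : i + 1 < k) : r (ρ^[i] w) = ρ^[i + 1] w :=
    h.apply_iterate_swap_mul hx (by omega) hip hik
  have iterate_inj {i j : ℕ} (hi : i < k) (hj : j < k) (hij : ρ^[i] w = ρ^[j] w) : i = j :=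
    (h.iterate_eq_iterate_iff hi hj).1 hij
  have iterate_notMem (i : ℕ) (hi : 1 < i) (hip : i ≠ p) (hik : i < k) :
      ρ^[i] w ∉ c.support := by
    rw [hsupp, h.iterate_mem_iff (by omega) (by omega) hik]
    omega
  have hu : r u = ρ^[2] w := by
    rw [← r_iterate 1 (by omega) (by omega), iterate_one, h.apply_eq]
  have hv : r v = ρ^[p + 1] w := by
    rw [← r_iterate p (by omega) (by omega), h.iterate_eq]
  refine ⟨u, v, w, p - 2, k - 1 - p, fun i => ρ^[i + 2] w, fun j => ρ^[j + (p + 1)] w, hsupp,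
    by omega, by omega, by omega,
    fun i hi j hj hij => add_right_cancel (iterate_inj (by omega) (by omega) hij),
    fun i hi j hj hij => add_right_cancel (iterate_inj (by omega) (by omega) hij),
    fun i hi j hj hij => absurd (iterate_inj (by omega) (by omega) hij) (by omega),
    fun i hi => iterate_notMem _ (by omega) (by omega) (by omega),
    fun j hj => iterate_notMem _ (by omega) (by omega) (by omega),
    hw, hu, by simp only [hv, zero_add],
    fun i hi => by rw [r_iterate _ (by omega) (by omega), add_right_comm],
    fun j hj => by rw [r_iterate _ (by omega) (by omega), add_right_comm], ?_⟩
  have ha_last : r (ρ^[p - 2 - 1 + 2] w) = Equiv.swap w x v := by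
    rw [show p - 2 - 1 + 2 = p - 1 by omega, h.apply_iterate_swap_mul_pred (by omega)]
  have hb_last : r (ρ^[k - 1 - p - 1 + (p + 1)] w) = x := by
    rw [show k - 1 - p - 1 + (p + 1) = k - 1 by omega, h.apply_iterate_swap_mul_last (by omega)]
  rcases hx with rfl | rfl
  · exact .inr ⟨by rw [ha_last, Equiv.swap_self, Equiv.refl_apply], hb_last⟩
  · exact .inl ⟨by rw [ha_last, Equiv.swap_apply_right], hb_last⟩

lemma isKPreBolstering_iff (hc : #c.support = 3) :
    IsKPreBolstering k c r ↔ ∃ e : Fin 3 ≃ c.support, ∃ p ∈ Icc 4 (k - 3),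
      HasPreBolsteringForm k p ↑(e 0) ↑(e 1) ↑(e 2) r := by
  refine ⟨fun h => h.exists_hasPreBolsteringForm hc, fun ⟨e, p, hp, h⟩ => ?_⟩
  rw [mem_Icc] at hp
  exact h.isKPreBolstering hp.1 (by omega) (labels_eq e).symm

lemma card_filter_and_isKPreBolstering (hc : #c.support = 3) {Q : Perm (Fin n) → Prop} {N : ℕ}
    (hN : ∀ (t : Fin 3 ↪ Fin n), ∀ p ∈ Icc 4 (k - 3),
      #{r | Q r ∧ HasPreBolsteringForm k p (t 0) (t 1) (t 2) r} = N) :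
    #{r | Q r ∧ IsKPreBolstering k c r} = 6 * (k - 6) * N := by
  have hunion : filter (fun r => Q r ∧ IsKPreBolstering k c r) univ =
      ((univ : Finset (Fin 3 ≃ c.support)) ×ˢ Icc 4 (k - 3)).biUnion fun ep =>
        {r | Q r ∧ HasPreBolsteringForm k ep.2 ↑(ep.1 0) ↑(ep.1 1) ↑(ep.1 2) r} := by
    ext r
    simp only [isKPreBolstering_iff hc, mem_filter_univ, mem_biUnion, mem_product, mem_univ,
      true_and, Prod.exists]
    tauto
  have hlabelings : Fintype.card (Fin 3 ≃ c.support) = 6 := by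
    rw [Fintype.card_equiv (Fintype.equivOfCardEq (by rw [Fintype.card_coe, hc, Fintype.card_fin])),
      Fintype.card_fin]
    rfl
  rw [hunion, card_biUnion]
  · have card_eq : ∀ ep ∈ (univ : Finset (Fin 3 ≃ c.support)) ×ˢ Icc 4 (k - 3),
        #{r | Q r ∧ HasPreBolsteringForm k ep.2 ↑(ep.1 0) ↑(ep.1 1) ↑(ep.1 2) r} = N :=
      fun ep hep => hN (ep.1.toEmbedding.trans (.subtype _)) ep.2 (mem_product.1 hep).2
    rw [sum_const_nat card_eq, card_product, card_univ, hlabelings, Nat.card_Icc,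
      show k - 3 + 1 - 4 = k - 6 by omega]
  · rintro ⟨e, p⟩ hep ⟨e', p'⟩ hep' hne
    simp only [mem_coe, mem_product, mem_Icc] at hep hep'
    refine disjoint_filter.2 fun r _ ⟨_, h⟩ ⟨_, h'⟩ => hne ?_
    obtain ⟨rfl, rfl⟩ :=
      h.labels_unique h' (by omega) (by omega) (by omega) (by omega)
    rfl

lemma card_filter_isKPreBolstering (hkn : k ≤ n) (hc : #c.support = 3) :
    #{r | IsKPreBolstering k c r} = 12 * (n - 3).factorial * (k - 6) := by
  have := card_filter_and_isKPreBolstering (k := k) hc (Q := fun _ => True)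
    (N := 2 * (n - 3).factorial) fun t p hp => by
      rw [mem_Icc] at hp
      simpa using card_filter_hasPreBolsteringForm (X := Fin n) (k := k) (p := p) (by omega)
        (by omega) (by simpa using hkn) t
  simp only [true_and] at this
  rw [this]
  ring

lemma card_filter_mem_alternatingGroup_and_isKPreBolstering (hkn : k ≤ n) (hc : #c.support = 3) :
    #{r | r ∈ alternatingGroup (Fin n) ∧ IsKPreBolstering k c r} =
      6 * (n - 3).factorial * (k - 6) := by
  rw [card_filter_and_isKPreBolstering hc (N := (n - 3).factorial)]
  · ring
  · intro t p hp
    rw [mem_Icc] at hp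
    simpa using card_filter_mem_alternatingGroup_and_hasPreBolsteringForm (X := Fin n) (k := k)
      (p := p) (by omega) (by omega) (by simpa using hkn) t

lemma card_filter_mem_and_isKPreBolstering_div_card {H : Subgroup (Perm (Fin n))}
    (hH : H = ⊤ ∨ H = alternatingGroup (Fin n)) (hkn : k ≤ n) (hc : #c.support = 3) :
    (#{r | r ∈ H ∧ IsKPreBolstering k c r} : ℝ) / Nat.card H =
      12 * (n - 3).factorial * (k - 6 : ℕ) / n.factorial := by
  rcases hH with rfl | rfl
  · rw [Subgroup.card_top, Nat.card_perm, Nat.card_fin]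
    simp only [Subgroup.mem_top, true_and, card_filter_isKPreBolstering hkn hc]
    push_cast
    rfl
  · have hn : 3 ≤ n := by simpa [hc] using card_le_univ c.support
    have : Nontrivial (Fin n) := Fin.nontrivial_iff_two_le.2 (by omega)
    have hcard := two_mul_nat_card_alternatingGroup (α := Fin n)
    rw [Nat.card_perm, Nat.card_fin] at hcard
    rw [card_filter_mem_alternatingGroup_and_isKPreBolstering hkn hc, ← hcard]
    push_cast
    rw [show (12 : ℝ) * (n - 3).factorial * (k - 6 : ℕ) =
      2 * (6 * (n - 3).factorial * (k - 6 : ℕ)) by ring, mul_div_mul_left _ _ two_ne_zero]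

end PreBolstering

end Cycles

section Average

open Finset

lemma sum_Icc_seven_sub_six {n : ℕ} (hn : 6 ≤ n) :
    ∑ j ∈ Icc 7 n, ((j - 6 : ℕ) : ℝ) = ((n : ℝ) - 6) * (n - 5) / 2 := by
  induction n, hn using Nat.le_induction with
  | base => norm_num
  | succ m hm ih =>
    rw [sum_Icc_succ_top (by omega), ih, Nat.cast_sub (by omega)]
    push_cast
    ring

lemma two_div_five_mul_le_sum_div_factorial {n : ℕ} (hn : 7 ≤ n) :
    2 / (5 * (n : ℝ)) ≤
      ∑ j ∈ Icc 7 n, 12 * ((n - 3).factorial : ℝ) * (j - 6 : ℕ) / n.factorial := by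
  rw [← sum_div, ← mul_sum, sum_Icc_seven_sub_six (by omega)]
  obtain ⟨m, rfl⟩ := Nat.exists_eq_add_of_le' hn
  have hfact : ((m + 7).factorial : ℝ) = (m + 7) * (m + 6) * (m + 5) * (m + 4).factorial := by
    simp only [Nat.factorial_succ (m + 6), Nat.factorial_succ (m + 5), Nat.factorial_succ (m + 4)]
    push_cast
    ring
  calc 2 / (5 * ((m + 7 : ℕ) : ℝ))
      ≤ 6 * (m + 1) * (m + 2) / ((m + 7) * (m + 6) * (m + 5)) := by
        push_cast
        rw [div_le_div_iff₀ (by positivity) (by positivity), ← sub_nonneg]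
        have : (0 : ℝ) ≤ 4 * (m + 7) * (m * (7 * m + 17)) := by positivity
        linarith
    _ = _ := by
        rw [show m + 7 - 3 = m + 4 by omega, hfact]
        push_cast
        field_simp
        ring

end Average

/-- For `7 ≤ k ≤ n`, `G ∈ {Alt_n, Sym_n}` and a `3`-cycle `c ∈ G`:
`L_{c,Sym_n}(k) = 12·(n−3)!·(k−6)`, `L_{c,Alt_n}(k) = 6·(n−3)!·(k−6)`, and
`(1/|G|)·Σ_{j=7}^{n} L_{c,G}(j) ≥ 2/(5n)`. -/
theorem preBolstering_counts (n k : ℕ) (hk : 7 ≤ k) (hkn : k ≤ n)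
    (H : Subgroup (Equiv.Perm (Fin n))) (hH : H = ⊤ ∨ H = alternatingGroup (Fin n))
    (c : Equiv.Perm (Fin n)) (hcH : c ∈ H) (hc : c.IsThreeCycle) :
    (Finset.univ.filter (fun r : Equiv.Perm (Fin n) => IsKPreBolstering k c r)).card
        = 12 * (n - 3).factorial * (k - 6) ∧
    (Finset.univ.filter (fun r : Equiv.Perm (Fin n) =>
        r ∈ alternatingGroup (Fin n) ∧ IsKPreBolstering k c r)).card
        = 6 * (n - 3).factorial * (k - 6) ∧
    2 / (5 * (n : ℝ)) ≤
      (∑ j ∈ Finset.Icc 7 n,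
        ((Finset.univ.filter (fun r : Equiv.Perm (Fin n) =>
          r ∈ H ∧ IsKPreBolstering j c r)).card : ℝ)) / (Fintype.card H : ℝ) := by
  refine ⟨card_filter_isKPreBolstering hkn hc.card_support,
    card_filter_mem_alternatingGroup_and_isKPreBolstering hkn hc.card_support, ?_⟩
  rw [← Nat.card_eq_fintype_card, Finset.sum_div, Finset.sum_congr rfl fun j hj =>
    card_filter_mem_and_isKPreBolstering_div_card hH (Finset.mem_Icc.1 hj).2 hc.card_support]
  exact two_div_five_mul_le_sum_div_factorial (hk.trans hkn)
end

section
/- Let n ≥ 7 be a natural number, G either Alt_n or Sym_n, c ∈ G a 3-cycle, 0 < ε < 1, and 1/2 < α ≤ 4/5. Set S := ⌈ 5n · max( (25/18)·⌈(1/2)·log_α(ε)⌉, (5/4)⁴·log(ε^{−1}) ) ⌉, where log is the natural logarithm and log_α(ε) = log(ε)/log(α). If x_1, …, x_S are independent, uniformly distributed random elements of G, then with probability at least 1 − ε at least ⌈(1/2)·log_α(ε)⌉ of the x_i are k-pre-bolstering with respect to c for some k with 7 ≤ k ≤ n. -/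
open scoped Classical

/-!
Write `s = supp c`. An element `r` is pre-bolstering as soon as, for some labelling
`s = {u, v, w}`, it maps `w ↦ u` and keeps the first two iterates of both `u` and `v` outside `s`:
the excursions of `u` and `v` away from `s` then are the sequences `a` and `b`, they are disjoint,
and as `u` is already the image of `w` they end in `v` and `w`, in one order or the other.

This opening `w ↦ u ↦ a₁ ↦ a₂`, `v ↦ b₁ ↦ b₂` prescribes only five values of `r`, so in a
`5`-transitive group each of the `6 (n - 3) (n - 4) (n - 5) (n - 6)` choices of the seven points is
realised by a proportion `1 / (n (n - 1) (n - 2) (n - 3) (n - 4))` of the elements. No element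
realises two of them, so the proportion of pre-bolstering elements is at least
`6 (n - 5) (n - 6) / (n (n - 1) (n - 2)) ≥ 2 / (5 n)`. The theorem is the Chernoff bound for the
lower tail `(1 - δ) μ` with `δ = 16 / 25`, for which `δ² / 2 = (5 / 4)⁻⁴ / 2`.
-/

open Equiv MulAction

/-! ### Return times -/

section ReturnTime

variable {X : Type*} {r : Perm X} {s : Set X} {x y : X}

/-- The first return time of `x` to `s` under `r`: the least `m > 0` with `r ^ m` mapping `x` into
`s`, or the junk value `0` if there is none. -/
noncomputable def returnTime (r : Perm X) (s : Set X) (x : X) : ℕ :=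
  sInf {m | 0 < m ∧ (r ^ m) x ∈ s}

theorem pow_apply_notMem_of_lt_returnTime {m : ℕ} (hm : 0 < m) (hlt : m < returnTime r s x) :
    (r ^ m) x ∉ s :=
  fun h ↦ Nat.notMem_of_lt_sInf hlt ⟨hm, h⟩

theorem eq_of_pow_apply_eq_pow_apply (hx : x ∈ s) (hy : y ∈ s) {i j : ℕ}
    (hi : i < returnTime r s x) (hj : j < returnTime r s y) (h : (r ^ i) x = (r ^ j) y) :
    x = y ∧ i = j := by
  wlog hij : i ≤ j generalizing x y i j
  · exact (this hy hx hj hi h.symm (le_of_not_ge hij)).imp Eq.symm Eq.symm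
  obtain ⟨m, rfl⟩ := Nat.exists_eq_add_of_le hij
  rw [pow_add, Perm.mul_apply] at h
  have hxy : x = (r ^ m) y := (r ^ i).injective h
  have hm : m = 0 := by
    by_contra hm
    exact pow_apply_notMem_of_lt_returnTime (Nat.pos_of_ne_zero hm) (by omega) (hxy ▸ hx)
  subst hm
  exact ⟨hxy, rfl⟩

theorem returnTime_eq_one (h : r x ∈ s) : returnTime r s x = 1 :=
  le_antisymm (Nat.sInf_le ⟨one_pos, by simpa using h⟩)
    (le_csInf ⟨1, one_pos, by simpa using h⟩ fun _ hm ↦ hm.1)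

theorem sum_returnTime_le_card [Fintype X] (r : Perm X) (s : Finset X) :
    ∑ x ∈ s, returnTime r s x ≤ Fintype.card X := by
  let excursions : Finset (Σ _ : X, ℕ) := s.sigma fun x ↦ Finset.range (returnTime r s x)
  have hinj : Set.InjOn (fun p : Σ _ : X, ℕ ↦ (r ^ p.2) p.1) excursions := by
    rintro ⟨x, i⟩ hp ⟨y, j⟩ hq h
    simp only [excursions, Finset.coe_sigma, Set.mem_sigma_iff, Finset.mem_coe,
      Finset.mem_range] at hp hq
    obtain ⟨rfl, rfl⟩ := eq_of_pow_apply_eq_pow_apply hp.1 hq.1 hp.2 hq.2 h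
    rfl
  simpa [excursions] using Finset.card_le_card_of_injOn (t := Finset.univ) _ (by simp) hinj

variable [Finite X]

theorem returnTime_spec (hx : x ∈ s) :
    0 < returnTime r s x ∧ (r ^ returnTime r s x) x ∈ s :=
  Nat.sInf_mem (s := {m | 0 < m ∧ (r ^ m) x ∈ s})
    ⟨orderOf r, orderOf_pos r, by simpa [pow_orderOf_eq_one] using hx⟩

theorem two_lt_returnTime (hx : x ∈ s) (h₁ : r x ∉ s) (h₂ : r (r x) ∉ s) :
    2 < returnTime r s x := by
  obtain ⟨hpos, hmem⟩ := returnTime_spec (r := r) hx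
  by_contra! hle
  interval_cases returnTime r s x
  · exact h₁ (by simpa using hmem)
  · exact h₂ (by simpa [pow_two] using hmem)

theorem injOn_pow_returnTime_apply : Set.InjOn (fun x ↦ (r ^ returnTime r s x) x) s := by
  intro x hx y hy h
  obtain ⟨i, hi⟩ := Nat.exists_eq_add_of_lt (returnTime_spec (r := r) hx).1
  obtain ⟨j, hj⟩ := Nat.exists_eq_add_of_lt (returnTime_spec (r := r) hy).1
  simp only [hi, hj, zero_add, pow_succ', Perm.mul_apply, r.injective.eq_iff] at h
  exact (eq_of_pow_apply_eq_pow_apply hx hy (by omega) (by omega) h).1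

theorem pow_returnTime_apply_of_eq_triple {u v w : X} (hs : s = {u, v, w}) (huv : u ≠ v)
    (huw : u ≠ w) (hvw : v ≠ w) (hw : r w = u) :
    ((r ^ returnTime r s u) u = w ∧ (r ^ returnTime r s v) v = v) ∨
      ((r ^ returnTime r s u) u = v ∧ (r ^ returnTime r s v) v = w) := by
  have hu_mem : u ∈ s := by simp [hs]
  have hv_mem : v ∈ s := by simp [hs]
  have hw_mem : w ∈ s := by simp [hs]
  have hinj := injOn_pow_returnTime_apply (r := r) (s := s)
  have hw_ret : (r ^ returnTime r s w) w = u := by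
    rw [returnTime_eq_one (hw ▸ hu_mem), pow_one, hw]
  have hends {x : X} (hx : x ∈ s) (hxw : x ≠ w) :
      (r ^ returnTime r s x) x = v ∨ (r ^ returnTime r s x) x = w := by
    have hmem : (r ^ returnTime r s x) x ∈ ({u, v, w} : Set X) := hs ▸ (returnTime_spec hx).2
    exact hmem.resolve_left (hw_ret ▸ hinj.ne hx hw_mem hxw)
  have hne : (r ^ returnTime r s u) u ≠ (r ^ returnTime r s v) v := hinj.ne hu_mem hv_mem huv
  grind

end ReturnTime

theorem isKPreBolstering_of_returnTime_eq {n α β : ℕ} {c r : Perm (Fin n)} {u v w : Fin n}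
    (hs : c.support = {u, v, w}) (huv : u ≠ v) (huw : u ≠ w) (hvw : v ≠ w) (hw : r w = u)
    (hα : 2 ≤ α) (hβ : 2 ≤ β) (hu_ret : returnTime r c.support u = α + 1)
    (hv_ret : returnTime r c.support v = β + 1) : IsKPreBolstering (α + β + 3) c r := by
  have hu : u ∈ c.support := by simp [hs]
  have hv : v ∈ c.support := by simp [hs]
  have hends := pow_returnTime_apply_of_eq_triple (r := r) (s := c.support) (by simp [hs]) huv huw
    hvw hw
  have hdisj {x y} (hx : x ∈ c.support) (hy : y ∈ c.support) {i j : ℕ}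
      (hi : i + 1 < returnTime r c.support x) (hj : j + 1 < returnTime r c.support y)
      (h : (r ^ (i + 1)) x = (r ^ (j + 1)) y) : x = y ∧ i = j :=
    (eq_of_pow_apply_eq_pow_apply hx hy hi hj h).imp_right Nat.succ.inj
  have hlast {m} (x) (hm : 2 ≤ m) : r ((r ^ (m - 1 + 1)) x) = (r ^ (m + 1)) x := by
    rw [Nat.sub_add_cancel (by omega), pow_succ', Perm.mul_apply]
  refine ⟨u, v, w, α, β, fun i ↦ (r ^ (i + 1)) u, fun j ↦ (r ^ (j + 1)) v, hs, hα, hβ, rfl,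
    fun i hi j hj h ↦ (hdisj hu hu (by omega) (by omega) h).2,
    fun i hi j hj h ↦ (hdisj hv hv (by omega) (by omega) h).2,
    fun i hi j hj h ↦ huv (hdisj hu hv (by omega) (by omega) h).1,
    fun i hi ↦ pow_apply_notMem_of_lt_returnTime (by omega) (by omega),
    fun j hj ↦ pow_apply_notMem_of_lt_returnTime (by omega) (by omega), hw, rfl, rfl,
    fun i _ ↦ by rw [← Perm.mul_apply, ← pow_succ'],
    fun j _ ↦ by rw [← Perm.mul_apply, ← pow_succ'], ?_⟩
  rwa [hlast u hα, hlast v hβ, ← hu_ret, ← hv_ret]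

theorem exists_isKPreBolstering_of_two_lt_returnTime {n : ℕ} {c r : Perm (Fin n)} {u v w : Fin n}
    (hs : c.support = {u, v, w}) (huv : u ≠ v) (huw : u ≠ w) (hvw : v ≠ w) (hw : r w = u)
    (hu₂ : 2 < returnTime r c.support u) (hv₂ : 2 < returnTime r c.support v) :
    ∃ k, 7 ≤ k ∧ k ≤ n ∧ IsKPreBolstering k c r := by
  have hu : r w ∈ (c.support : Set (Fin n)) := by simp [hs, hw]
  have hsum := sum_returnTime_le_card r c.support
  rw [Finset.sum_congr hs fun _ _ ↦ rfl, Finset.sum_insert (by simp [huv, huw]),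
    Finset.sum_pair hvw, returnTime_eq_one hu, Fintype.card_fin] at hsum
  obtain ⟨α, hα⟩ := Nat.exists_eq_add_of_lt hu₂
  obtain ⟨β, hβ⟩ := Nat.exists_eq_add_of_lt hv₂
  exact ⟨_, by omega, by omega,
    isKPreBolstering_of_returnTime_eq hs huv huw hvw hw (by omega) (by omega) hα hβ⟩

/-! ### Openings -/

/-- Seven distinct points `w, u, v` and `a₁, a₂, b₁, b₂`, the former enumerating `s` and the latter
outside `s`, in these orders. They are the points that determine whether the opening
`w ↦ u ↦ a₁ ↦ a₂`, `v ↦ b₁ ↦ b₂` of a pre-bolstering element occurs. -/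
abbrev Opening {X : Type*} (s : Finset X) : Type _ := (Fin 3 ≃ s) × (Fin 4 ↪ {x // x ∉ s})

namespace Opening

variable {X : Type*} {s : Finset X}

theorem card_eq [Fintype X] [DecidableEq X] (hs : s.card = 3) :
    Fintype.card (Opening s) = 6 * (Fintype.card X - 3).descFactorial 4 := by
  have e : Fin 3 ≃ s := (finCongr hs.symm).trans s.equivFin.symm
  simp [Opening, Fintype.card_equiv e, Fintype.card_subtype_compl, hs, Nat.factorial]

variable [DecidableEq X]

/-- The seven points of an opening, as an embedding into `X`. -/
def toEmbedding (d : Opening s) : Fin 3 ⊕ Fin 4 ↪ X :=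
  (d.1.toEmbedding.sumMap d.2).trans (Equiv.sumCompl (· ∈ s)).toEmbedding

/-- The positions of the points `w, u, a₁, v, b₁`, whose images an opening prescribes. -/
def source : Fin 5 ↪ Fin 3 ⊕ Fin 4 := ⟨![.inl 0, .inl 1, .inr 0, .inl 2, .inr 2], by decide⟩

/-- The positions of the points `u, a₁, a₂, b₁, b₂`, the prescribed images. -/
def target : Fin 5 ↪ Fin 3 ⊕ Fin 4 := ⟨![.inl 1, .inr 0, .inr 1, .inr 2, .inr 3], by decide⟩

/-- The permutation `r` maps `w ↦ u ↦ a₁ ↦ a₂` and `v ↦ b₁ ↦ b₂`. -/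
def IsRealizedBy (d : Opening s) (r : Perm X) : Prop :=
  r • source.trans d.toEmbedding = target.trans d.toEmbedding

theorem isRealizedBy_iff {d : Opening s} {r : Perm X} :
    d.IsRealizedBy r ↔ r (d.1 0) = d.1 1 ∧ r (d.1 1) = d.2 0 ∧ r (d.2 0) = d.2 1 ∧
      r (d.1 2) = d.2 2 ∧ r (d.2 2) = d.2 3 := by
  simp [IsRealizedBy, DFunLike.ext_iff, Fin.forall_fin_succ, source, target, toEmbedding]

theorem IsRealizedBy.unique {d d' : Opening s} {r : Perm X} (h : d.IsRealizedBy r)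
    (h' : d'.IsRealizedBy r) : d = d' := by
  rw [isRealizedBy_iff] at h h'
  obtain ⟨hw, hu, ha, hv, hb⟩ := h
  obtain ⟨hw', hu', ha', hv', hb'⟩ := h'
  have h_inl_zero : d.1 0 = d'.1 0 := by
    obtain ⟨j, hj⟩ := d.1.surjective (d'.1 0)
    have hr_mem : r (d.1 j) ∈ s := by rw [hj, hw']; exact (d'.1 1).2
    fin_cases j
    · exact hj
    · exact absurd hr_mem (hu ▸ (d.2 0).2)
    · exact absurd hr_mem (hv ▸ (d.2 2).2)
  have h_inl_one : d.1 1 = d'.1 1 := by rw [Subtype.ext_iff, ← hw, ← hw', h_inl_zero]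
  have h_inl_two : d.1 2 = d'.1 2 := by
    obtain ⟨j, hj⟩ := d.1.surjective (d'.1 2)
    fin_cases j
    · exact absurd (hj.symm.trans h_inl_zero) (d'.1.injective.ne (by decide))
    · exact absurd (hj.symm.trans h_inl_one) (d'.1.injective.ne (by decide))
    · exact hj
  have h_inr_zero : d.2 0 = d'.2 0 := by rw [Subtype.ext_iff, ← hu, ← hu', h_inl_one]
  have h_inr_one : d.2 1 = d'.2 1 := by rw [Subtype.ext_iff, ← ha, ← ha', h_inr_zero]
  have h_inr_two : d.2 2 = d'.2 2 := by rw [Subtype.ext_iff, ← hv, ← hv', h_inl_two]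
  have h_inr_three : d.2 3 = d'.2 3 := by rw [Subtype.ext_iff, ← hb, ← hb', h_inr_two]
  refine Prod.ext (Equiv.ext fun i ↦ ?_) (DFunLike.ext _ _ fun i ↦ ?_) <;> fin_cases i <;>
    assumption

theorem IsRealizedBy.exists_isKPreBolstering {n : ℕ} {c r : Perm (Fin n)}
    {d : Opening c.support} (h : d.IsRealizedBy r) :
    ∃ k, 7 ≤ k ∧ k ≤ n ∧ IsKPreBolstering k c r := by
  obtain ⟨hw, hu, ha, hv, hb⟩ := isRealizedBy_iff.1 h
  have hne {i j : Fin 3} (hij : i ≠ j) : (d.1 i : Fin n) ≠ d.1 j :=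
    Subtype.coe_injective.ne (d.1.injective.ne hij)
  have hs : c.support = {(d.1 1 : Fin n), (d.1 2 : Fin n), (d.1 0 : Fin n)} := by
    ext x
    refine ⟨fun hx ↦ ?_, ?_⟩
    · obtain ⟨i, hi⟩ := d.1.surjective ⟨x, hx⟩
      fin_cases i <;> simp_all
    · simp only [Finset.mem_insert, Finset.mem_singleton]
      rintro (rfl | rfl | rfl) <;> exact Subtype.property _
  refine exists_isKPreBolstering_of_two_lt_returnTime hs (hne (by decide)) (hne (by decide))
    (hne (by decide)) hw (two_lt_returnTime (d.1 1).2 ?_ ?_) (two_lt_returnTime (d.1 2).2 ?_ ?_)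
  · exact hu ▸ (d.2 0).2
  · exact hu ▸ ha ▸ (d.2 1).2
  · exact hv ▸ (d.2 2).2
  · exact hv ▸ hb ▸ (d.2 3).2

end Opening

theorem card_filter_smul_eq_mul_card {G Y : Type*} [Group G] [Fintype G] [Fintype Y]
    [DecidableEq Y] [MulAction G Y] [IsPretransitive G Y] (x y : Y) :
    (Finset.univ.filter fun g : G ↦ g • x = y).card * Fintype.card Y = Fintype.card G := by
  have hfiber (z : Y) : (Finset.univ.filter fun g : G ↦ g • x = z).card =
      (Finset.univ.filter fun g : G ↦ g • x = y).card := by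
    obtain ⟨k, hk⟩ := exists_smul_eq G z y
    exact Finset.card_equiv (Equiv.mulLeft k) fun g ↦ by simp [mul_smul, ← hk]
  have hsum := Finset.card_eq_sum_card_fiberwise (s := (Finset.univ : Finset G))
    (t := (Finset.univ : Finset Y)) (f := fun g : G ↦ g • x) (by simp)
  rw [Finset.sum_congr rfl fun z _ ↦ hfiber z, Finset.sum_const, smul_eq_mul] at hsum
  rw [mul_comm, ← Finset.card_univ, ← Finset.card_univ, hsum]

-- For a subgroup of `Perm X`, instance search does not find the action on `Fin k ↪ X` that
-- `IsMultiplyPretransitive` uses, so this is stated for an arbitrary group.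
theorem card_filter_smul_eq_mul_descFactorial {G X : Type*} [Group G] [Fintype G] [Fintype X]
    [DecidableEq X] [MulAction G X] {k : ℕ} [IsMultiplyPretransitive G X k] (x y : Fin k ↪ X) :
    (Finset.univ.filter fun g : G ↦ g • x = y).card * (Fintype.card X).descFactorial k =
      Fintype.card G := by
  simpa using card_filter_smul_eq_mul_card (G := G) x y

section Density

variable {n : ℕ} (H : Subgroup (Perm (Fin n))) [IsMultiplyPretransitive H (Fin n) 5]

theorem Opening.card_filter_isRealizedBy_mul_descFactorial {s : Finset (Fin n)} (d : Opening s) :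
    (Finset.univ.filter fun r : H ↦ d.IsRealizedBy r).card * n.descFactorial 5 =
      Fintype.card H := by
  have hcard := card_filter_smul_eq_mul_descFactorial (G := H) (source.trans d.toEmbedding)
    (target.trans d.toEmbedding)
  rw [Fintype.card_fin] at hcard
  convert hcard
  rfl

theorem card_opening_mul_card_le {c : Perm (Fin n)} :
    Fintype.card (Opening c.support) * Fintype.card H ≤
      (Finset.univ.filter fun r : H ↦ ∃ k, 7 ≤ k ∧ k ≤ n ∧ IsKPreBolstering k c r).card *
        n.descFactorial 5 := by
  let realizing (d : Opening c.support) : Finset H := Finset.univ.filter fun r ↦ d.IsRealizedBy r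
  have hdisj : (Set.univ : Set (Opening c.support)).PairwiseDisjoint realizing := by
    intro d _ d' _ hne
    refine Finset.disjoint_left.2 fun r hr hr' ↦ hne ?_
    simp only [realizing, Finset.mem_filter] at hr hr'
    exact hr.2.unique hr'.2
  have hsub : Finset.univ.biUnion realizing ⊆
      Finset.univ.filter fun r : H ↦ ∃ k, 7 ≤ k ∧ k ≤ n ∧ IsKPreBolstering k c r := by
    refine Finset.biUnion_subset.2 fun d _ ↦ Finset.monotone_filter_right _ fun r _ hr ↦ ?_
    exact hr.exists_isKPreBolstering
  calc Fintype.card (Opening c.support) * Fintype.card H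
      = (Finset.univ.biUnion realizing).card * n.descFactorial 5 := by
        rw [Finset.card_biUnion (by simpa using hdisj), Finset.sum_mul,
          Finset.sum_congr rfl fun d _ ↦ d.card_filter_isRealizedBy_mul_descFactorial H]
        simp
    _ ≤ _ := Nat.mul_le_mul_right _ (Finset.card_le_card hsub)

theorem two_mul_card_le_card_filter_isKPreBolstering {c : Perm (Fin n)} (hn : 7 ≤ n)
    (hc : c.IsThreeCycle) :
    2 * Fintype.card H ≤ 5 * n *
      (Finset.univ.filter fun r : H ↦ ∃ k, 7 ≤ k ∧ k ≤ n ∧ IsKPreBolstering k c r).card := by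
  have hcount := card_opening_mul_card_le H (c := c)
  rw [Opening.card_eq hc.card_support, Fintype.card_fin] at hcount
  have hdesc : 2 * n.descFactorial 5 ≤ 5 * n * (6 * (n - 3).descFactorial 4) := by
    obtain ⟨m, rfl⟩ := Nat.exists_eq_add_of_le' hn
    have hfactor : 2 * ((m + 6) * (m + 5)) ≤ 5 * 6 * ((m + 2) * (m + 1)) := by nlinarith
    simp only [Nat.descFactorial, Nat.reduceSubDiff, tsub_zero, mul_one]
    calc _ = (m + 7) * (m + 4) * (m + 3) * (2 * ((m + 6) * (m + 5))) := by ring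
      _ ≤ (m + 7) * (m + 4) * (m + 3) * (5 * 6 * ((m + 2) * (m + 1))) := by gcongr
      _ = _ := by ring
  refine Nat.le_of_mul_le_mul_right ?_ (Nat.descFactorial_pos.2 (by omega) : 0 < n.descFactorial 5)
  grw [mul_right_comm, hdesc, mul_assoc (5 * n), hcount, mul_assoc (5 * n)]

end Density

/-! ### The Chernoff bound -/

theorem neg_log_one_sub_mul_le {δ : ℝ} (hδ0 : 0 ≤ δ) (hδ1 : δ < 1) :
    -Real.log (1 - δ) * (1 - δ) ≤ δ - δ ^ 2 / 2 := by
  have hpos : 0 < 1 - δ := sub_pos.2 hδ1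
  have hsinh : -Real.log (1 - δ) ≤ Real.sinh (-Real.log (1 - δ)) :=
    Real.self_le_sinh_iff.2 (neg_nonneg.2 (Real.log_nonpos hpos.le (by linarith)))
  rw [← Real.log_inv, Real.sinh_log (inv_pos.2 hpos), inv_inv] at hsinh
  calc -Real.log (1 - δ) * (1 - δ)
      ≤ ((1 - δ)⁻¹ - (1 - δ)) / 2 * (1 - δ) := by
        rw [← Real.log_inv]
        gcongr
    _ = δ - δ ^ 2 / 2 := by
        field_simp
        ring

section Chernoff

variable {ι A : Type*} [Fintype ι] [DecidableEq ι] [Fintype A] (P : A → Prop)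

theorem card_filter_card_lt_mul_pow_le (R : ℕ) {t : ℝ} (ht0 : 0 ≤ t) (ht1 : t ≤ 1) :
    ((Finset.univ.filter fun f : ι → A ↦
        (Finset.univ.filter fun i ↦ P (f i)).card < R).card : ℝ) * t ^ R ≤
      (Fintype.card A - (1 - t) * (Finset.univ.filter P).card) ^ Fintype.card ι := by
  have hweight : ∑ a : A, (if P a then t else 1) =
      Fintype.card A - (1 - t) * (Finset.univ.filter P).card := by
    have (a : A) : (if P a then t else 1) = 1 - (1 - t) * (if P a then 1 else 0) := by
      split_ifs <;> ring
    simp only [this, Finset.sum_sub_distrib, ← Finset.mul_sum]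
    simp
  rw [← hweight, ← nsmul_eq_mul, ← Finset.sum_const]
  calc _ ≤ ∑ f ∈ Finset.univ.filter fun f : ι → A ↦
          (Finset.univ.filter fun i ↦ P (f i)).card < R,
          t ^ (Finset.univ.filter fun i ↦ P (f i)).card :=
        Finset.sum_le_sum fun f hf ↦
          pow_le_pow_of_le_one ht0 ht1 (Finset.mem_filter.1 hf).2.le
    _ ≤ ∑ f : ι → A, t ^ (Finset.univ.filter fun i ↦ P (f i)).card :=
        Finset.sum_le_sum_of_subset_of_nonneg (Finset.filter_subset _ _)
          fun _ _ _ ↦ by positivity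
    _ = ∑ f : ι → A, ∏ i, (if P (f i) then t else 1) := by
        simp [Finset.prod_ite]
    _ = (∑ a : A, (if P a then t else 1)) ^ Fintype.card ι := by
        rw [← Fintype.prod_sum (fun _ : ι ↦ fun a : A ↦ if P a then t else 1)]
        simp

theorem card_filter_card_lt_le_exp {p δ : ℝ} {R : ℕ} (hδ0 : 0 ≤ δ) (hδ1 : δ < 1)
    (hp : p * Fintype.card A ≤ (Finset.univ.filter P).card)
    (hR : R ≤ (1 - δ) * (p * Fintype.card ι)) :
    ((Finset.univ.filter fun f : ι → A ↦
        (Finset.univ.filter fun i ↦ P (f i)).card < R).card : ℝ) ≤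
      Real.exp (-(δ ^ 2 / 2 * (p * Fintype.card ι))) *
        (Fintype.card A : ℝ) ^ Fintype.card ι := by
  set μ : ℝ := p * Fintype.card ι with hμ_def
  have hpos : 0 < 1 - δ := sub_pos.2 hδ1
  have hμ : 0 ≤ μ := nonneg_of_mul_nonneg_right (R.cast_nonneg.trans hR) hpos
  have hbase_nonneg : 0 ≤ (Fintype.card A : ℝ) - δ * (Finset.univ.filter P).card := by
    have : ((Finset.univ.filter P).card : ℝ) ≤ Fintype.card A :=
      mod_cast Finset.card_le_univ _
    nlinarith
  have hbase : (Fintype.card A : ℝ) - δ * (Finset.univ.filter P).card ≤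
      Real.exp (-(δ * p)) * Fintype.card A :=
    calc _ ≤ (-(δ * p) + 1) * (Fintype.card A : ℝ) := by nlinarith
      _ ≤ _ := by gcongr; exact Real.add_one_le_exp _
  have htail := card_filter_card_lt_mul_pow_le (ι := ι) P R hpos.le (sub_le_self 1 hδ0)
  rw [sub_sub_cancel, ← le_div_iff₀ (by positivity)] at htail
  have hexponent : -(δ * μ) + R * -Real.log (1 - δ) ≤ -(δ ^ 2 / 2 * μ) := by
    have hlog : 0 ≤ -Real.log (1 - δ) :=
      neg_nonneg.2 (Real.log_nonpos hpos.le (sub_le_self 1 hδ0))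
    have := mul_le_mul_of_nonneg_right hR hlog
    have := mul_le_mul_of_nonneg_right (neg_log_one_sub_mul_le hδ0 hδ1) hμ
    linarith
  calc _ ≤ _ := htail
    _ ≤ (Real.exp (-(δ * p)) * Fintype.card A) ^ Fintype.card ι / (1 - δ) ^ R := by gcongr
    _ = Real.exp (-(δ * μ) + R * -Real.log (1 - δ)) *
        (Fintype.card A : ℝ) ^ Fintype.card ι := by
        rw [mul_pow, ← Real.exp_nat_mul, Real.exp_add, Real.exp_nat_mul _ R,
          Real.exp_neg (Real.log _), Real.exp_log hpos, hμ_def]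
        ring_nf
    _ ≤ _ := by gcongr

end Chernoff

theorem one_sub_le_card_filter_div_card_s16 {Y : Type*} [Fintype Y] [Nonempty Y] {Q : Y → Prop}
    [DecidablePred Q] {ε : ℝ}
    (h : ((Finset.univ.filter fun y ↦ ¬ Q y).card : ℝ) ≤ ε * Fintype.card Y) :
    1 - ε ≤ ((Finset.univ.filter Q).card : ℝ) / Fintype.card Y := by
  have hadd : ((Finset.univ.filter Q).card : ℝ) + (Finset.univ.filter fun y ↦ ¬ Q y).card =
      Fintype.card Y := mod_cast Finset.card_filter_add_card_filter_not Q
  rw [le_div_iff₀ (mod_cast Fintype.card_pos)]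
  linarith

theorem isMultiplyPretransitive_of_eq_top_or_eq_alternatingGroup {X : Type*} [Fintype X]
    [DecidableEq X] {H : Subgroup (Perm X)} (hH : H = ⊤ ∨ H = alternatingGroup X) {k : ℕ}
    (hk : k + 2 ≤ Fintype.card X) : IsMultiplyPretransitive H X k := by
  rcases hH with rfl | rfl
  · refine ⟨fun x y ↦ ?_⟩
    obtain ⟨g, hg⟩ := (Perm.isMultiplyPretransitive X k).exists_smul_eq x y
    exact ⟨⟨g, Subgroup.mem_top g⟩, hg⟩
  · have := alternatingGroup.isMultiplyPretransitive X
    exact isMultiplyPretransitive_of_le (n := Nat.card X - 2)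
      (by rw [Nat.card_eq_fintype_card]; omega) (Nat.sub_le _ _)

theorem enough_preBolstering_elements_general (n : ℕ) (hn : 7 ≤ n)
    (H : Subgroup (Perm (Fin n))) [IsMultiplyPretransitive H (Fin n) 5]
    (c : Perm (Fin n)) (hc : c.IsThreeCycle) (ε : ℝ) (hε : 0 < ε) (R S : ℕ)
    (hS : 5 * (n : ℝ) * max ((25 / 18) * (R : ℝ)) ((5 / 4) ^ 4 * Real.log ε⁻¹) ≤ S) :
    1 - ε ≤
      ((Finset.univ.filter fun f : Fin S → H ↦
          R ≤ (Finset.univ.filter fun i ↦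
            ∃ k, 7 ≤ k ∧ k ≤ n ∧ IsKPreBolstering k c (f i)).card).card : ℝ) /
        Fintype.card (Fin S → H) := by
  have : (0 : ℝ) < n := mod_cast (by omega : 0 < n)
  have hdensity : 2 / (5 * n : ℝ) * Fintype.card H ≤ (Finset.univ.filter fun r : H ↦
      ∃ k, 7 ≤ k ∧ k ≤ n ∧ IsKPreBolstering k c r).card := by
    rw [div_mul_eq_mul_div, div_le_iff₀' (by positivity)]
    exact_mod_cast two_mul_card_le_card_filter_isKPreBolstering H hn hc
  have hmean : 2 * max ((25 / 18) * (R : ℝ)) ((5 / 4) ^ 4 * Real.log ε⁻¹) ≤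
      2 / (5 * n) * Fintype.card (Fin S) := by
    rw [Fintype.card_fin, div_mul_eq_mul_div 2, le_div_iff₀ (by positivity)]
    linarith
  obtain ⟨hmean_R, hmean_ε⟩ := max_le_iff.1 ((le_div_iff₀' two_pos).2 hmean)
  apply one_sub_le_card_filter_div_card_s16
  simp only [not_le]
  grw [card_filter_card_lt_le_exp _ (δ := 16 / 25) (by norm_num) (by norm_num) hdensity
    (by linarith)]
  simp only [Fintype.card_fun, Nat.cast_pow]
  gcongr
  rw [← Real.le_log_iff_exp_le hε]
  rw [Real.log_inv] at hmean_ε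
  linarith

/-- Let `n ≥ 7`, `G ∈ {Alt_n, Sym_n}`, `c ∈ G` a `3`-cycle, `0 < ε < 1`,
`1/2 < α ≤ 4/5`, `R = ⌈(1/2)·log_α ε⌉` and
`S = ⌈5n·max((25/18)·R, (5/4)⁴·log ε⁻¹)⌉`.  Among all `S`-tuples of elements of `G` (each
tuple equally likely, modelling independent uniform random elements), the proportion of
tuples having at least `R` entries that are `k`-pre-bolstering with respect to `c` for
some `7 ≤ k ≤ n` is at least `1 − ε`. -/
theorem enough_preBolstering_elements (n : ℕ) (hn : 7 ≤ n)
    (H : Subgroup (Equiv.Perm (Fin n))) (hH : H = ⊤ ∨ H = alternatingGroup (Fin n))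
    (c : Equiv.Perm (Fin n)) (hcH : c ∈ H) (hc : c.IsThreeCycle)
    (ε α : ℝ) (hε0 : 0 < ε) (hε1 : ε < 1) (hα1 : 1 / 2 < α) (hα2 : α ≤ 4 / 5)
    (R S : ℕ) (hR : R = ⌈(1 / 2) * (Real.log ε / Real.log α)⌉₊)
    (hS : S = ⌈5 * (n : ℝ) * max ((25 / 18) * (R : ℝ)) ((5 / 4) ^ 4 * Real.log ε⁻¹)⌉₊) :
    1 - ε ≤
      ((Finset.univ.filter (fun f : Fin S → H =>
          R ≤ (Finset.univ.filter (fun i : Fin S => ∃ k, 7 ≤ k ∧ k ≤ n ∧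
              IsKPreBolstering k c ((f i : Equiv.Perm (Fin n))))).card)).card : ℝ) /
        (Fintype.card (Fin S → H) : ℝ) := by
  have : IsMultiplyPretransitive H (Fin n) 5 :=
    isMultiplyPretransitive_of_eq_top_or_eq_alternatingGroup hH (by simpa using hn)
  exact enough_preBolstering_elements_general n hn H c hc ε hε0 R S (hS ▸ Nat.le_ceil _)
end
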